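/- Let d be an odd positive integer and let 𝒟 = {D₁, D₂} be partitions of d with ν(D₁) + ν(D₂) = d − 1 and ν(D₁) ≥ ν(D₂). If gcd(D₁) = 1, gcd(D₂) = 1, and 𝒟 ≠ {[2,…,2,1], [2,…,2,1]}, then there exist permutations α ∈ D₁, β ∈ D₂ of the d-element set and a permutation ω with ω² = αβ such that the group ⟨α, β, ω⟩ is transitive and primitive. -/

import Mathlib

/-- The cycle type of a permutation, including fixed points as parts equal to `1`. -/
def fullCycleType {Ω : Type*} [Fintype Ω] [DecidableEq Ω] (σ : Equiv.Perm Ω) : Multiset ℕ :=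
  σ.cycleType + Multiset.replicate (Fintype.card Ω - σ.support.card) 1

/-- A multiset of positive integers summing to `d`, i.e. a partition of `d`. -/
def IsPartitionOf (d : ℕ) (D : Multiset ℕ) : Prop :=
  (∀ x ∈ D, 0 < x) ∧ D.sum = d

/-- The defect `ν(D) = Σⱼ (dⱼ − 1)` of a partition. -/
def nu (D : Multiset ℕ) : ℕ := (D.map (· - 1)).sum

/-- The partition `[2,…,2,1]` of an odd number `d`, with `(d−1)/2` parts equal to `2`. -/
def twosAndOne (d : ℕ) : Multiset ℕ := Multiset.replicate ((d - 1) / 2) 2 + {1}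

/-- A subgroup of the symmetric group on `Ω` is transitive. -/
def SubgroupTransitive {Ω : Type*} (G : Subgroup (Equiv.Perm Ω)) : Prop :=
  ∀ x y : Ω, ∃ g ∈ G, g x = y

/-- `Λ` is a block for the subgroup `G` of the symmetric group on `Ω`. -/
def IsBlockOf {Ω : Type*} (G : Subgroup (Equiv.Perm Ω)) (Λ : Set Ω) : Prop :=
  Λ.Nonempty ∧ ∀ g ∈ G, (⇑g '' Λ = Λ ∨ Disjoint (⇑g '' Λ) Λ)

/-- A block is trivial if it is a singleton or the whole set. -/
def TrivialBlock {Ω : Type*} (Λ : Set Ω) : Prop :=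
  (∃ x, Λ = {x}) ∨ Λ = Set.univ

/-- A subgroup of the symmetric group is primitive: transitive with only trivial blocks. -/
def SubgroupPrimitive {Ω : Type*} (G : Subgroup (Equiv.Perm Ω)) : Prop :=
  SubgroupTransitive G ∧ ∀ Λ : Set Ω, IsBlockOf G Λ → TrivialBlock Λ

/-- A subgroup of the symmetric group is imprimitive: transitive but not primitive. -/
def SubgroupImprimitive {Ω : Type*} (G : Subgroup (Equiv.Perm Ω)) : Prop :=
  SubgroupTransitive G ∧ ¬ SubgroupPrimitive G

/-- The orbit of `x` under a subgroup `G` of the symmetric group on `Ω`. -/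
def orbSet {Ω : Type*} (G : Subgroup (Equiv.Perm Ω)) (x : Ω) : Set Ω :=
  {y | ∃ g ∈ G, g x = y}

/-- The number of orbits of a subgroup `G` of the symmetric group on `Ω`. -/
noncomputable def numOrbits {Ω : Type*} (G : Subgroup (Equiv.Perm Ω)) : ℕ :=
  Nat.card (Set.range (orbSet G))

/-- Combinatorial layout of the plane tree. -/
structure Layout (d s n : ℕ) (u E : ℕ → ℕ) : Prop where
  hs : 1 ≤ s
  u0 : u 0 = 1
  ulast : u s = n
  ult : ∀ j, j < s → u j < u (j + 1)
  u1 : 3 ≤ u 1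
  anti : ∀ j j', j ≤ j' → j' < s → u (j' + 1) - u j' ≤ u (j + 1) - u j
  E0 : E 0 = 0
  Elt : ∀ i, i + 1 < n → E i < E (i + 1)
  Ele : ∀ i, i < n → E i ≤ E (i + 1)
  Elast : E n + s = d
  sorted : ∀ i i', 1 ≤ i → i ≤ i' → i' < n → (∀ j, 1 ≤ j → j ≤ s → u j ≠ i) →
    (∀ j, 1 ≤ j → j ≤ s → u j ≠ i') → E i' - E (i' - 1) ≤ E i - E (i - 1)

namespace Layout
variable {d s n : ℕ} {u E : ℕ → ℕ}

theorem u_mono (h : Layout d s n u E) {a b : ℕ} (hab : a ≤ b) (hb : b ≤ s) : u a ≤ u b := by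
  induction b, hab using Nat.le_induction with
  | base => exact le_rfl
  | succ b _ ih => exact (ih (by omega)).trans (h.ult b (by omega)).le

theorem u_strict (h : Layout d s n u E) {a b : ℕ} (hab : a < b) (hb : b ≤ s) : u a < u b :=
  (h.ult a (by omega)).trans_le (h.u_mono (by omega) hb)

theorem u_between (h : Layout d s n u E) {j i : ℕ} (hj : j < s) (h1 : u j < i)
    (h2 : i < u (j + 1)) : ∀ j', 1 ≤ j' → j' ≤ s → u j' ≠ i := by
  intro j' _ hj' he
  rcases Nat.lt_or_ge j j' with hlt | hge
  · have := h.u_mono (a := j + 1) (b := j') hlt hj'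
    omega
  · have := h.u_mono hge hj.le
    omega

theorem E_mono (h : Layout d s n u E) {a b : ℕ} (hab : a ≤ b) (hb : b ≤ n) : E a ≤ E b := by
  induction b, hab using Nat.le_induction with
  | base => exact le_rfl
  | succ b _ ih => exact (ih (by omega)).trans (h.Ele b (by omega))

theorem E_add (h : Layout d s n u E) {a b : ℕ} (hab : a ≤ b) (hb : b < n) :
    E a + (b - a) ≤ E b := by
  induction b, hab using Nat.le_induction with
  | base => simp
  | succ b hb' ih =>
    have := ih (by omega)
    have := h.Elt b hb
    omega

theorem E_strict (h : Layout d s n u E) {a b : ℕ} (hab : a < b) (hb : b < n) : E a < E b := by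
  have := h.E_add hab.le hb
  omega

theorem E_inj (h : Layout d s n u E) {a b : ℕ} (ha : a < n) (hb : b < n) (he : E a = E b) :
    a = b := by
  rcases lt_trichotomy a b with hl | hl | hl
  · have := h.E_strict hl hb
    omega
  · exact hl
  · have := h.E_strict hl ha
    omega

theorem u_pos (h : Layout d s n u E) {j : ℕ} (hj : j ≤ s) : 1 ≤ u j := by
  have := h.u_mono (Nat.zero_le j) hj
  rw [h.u0] at this
  exact this

theorem u_add (h : Layout d s n u E) {j : ℕ} (hj : j ≤ s) : 1 + j ≤ u j := by
  induction j with
  | zero => rw [h.u0]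
  | succ j ih =>
    have := h.ult j (by omega)
    have := ih (by omega)
    omega

theorem s_add_two_le (h : Layout d s n u E) : s + 2 ≤ n := by
  have key : ∀ j, 1 ≤ j → j ≤ s → j + 2 ≤ u j := by
    intro j hj
    induction j, hj using Nat.le_induction with
    | base => intro _; exact h.u1
    | succ j _ ih =>
      intro hs
      have := h.ult j (by omega)
      have := ih (by omega)
      omega
  have := key s h.hs le_rfl
  rw [h.ulast] at this
  exact this

theorem locate_E (h : Layout d s n u E) {m x : ℕ} (hx : 1 ≤ x) (hxm : x ≤ E m) :
    ∃ i, i < m ∧ E i < x ∧ x ≤ E (i + 1) := by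
  induction m with
  | zero => rw [h.E0] at hxm; omega
  | succ m ih =>
    rcases Nat.lt_or_ge (E m) x with hl | hl
    · exact ⟨m, by omega, hl, hxm⟩
    · obtain ⟨i, h1, h2⟩ := ih hl
      exact ⟨i, by omega, h2⟩

theorem locate_u (h : Layout d s n u E) {i : ℕ} (hi : 1 ≤ i) (hin : i < n) :
    ∃ j, j < s ∧ u j ≤ i ∧ i < u (j + 1) := by
  have key : ∀ m, i < u m → ∃ j, j < m ∧ u j ≤ i ∧ i < u (j + 1) := by
    intro m
    induction m with
    | zero => intro hm; rw [h.u0] at hm; omega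
    | succ m ih =>
      intro hm
      rcases Nat.lt_or_ge i (u m) with hl | hl
      · obtain ⟨j, h1, h2⟩ := ih hl
        exact ⟨j, by omega, h2⟩
      · exact ⟨m, by omega, hl, hm⟩
  exact key s (by rw [h.ulast]; exact hin)

end Layout

theorem cast_eq_of_lt {k a b : ℕ} (h : (a : ZMod k) = (b : ZMod k)) (hab : a ≤ b)
    (hlt : b < a + k) : a = b := by
  rw [ZMod.natCast_eq_natCast_iff] at h
  have h1 := (Nat.modEq_iff_dvd' hab).1 h
  have h2 := Nat.eq_zero_of_dvd_of_lt h1 (by omega)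
  omega

theorem core {d s n k : ℕ} {u E : ℕ → ℕ} (h : Layout d s n u E) (hkd : k ∣ d) (hk1 : 1 < k)
    (hk3 : 3 * k ≤ d) (B : ZMod k → ZMod k) (hinj : Function.Injective B)
    (hE : ∀ j, j < s → ∀ i, u j ≤ i → i + 1 < u (j + 1) →
      B ((E i : ℕ) : ZMod k) = ((E (i + 1) : ℕ) : ZMod k))
    (hf : ∀ j, j < s → B ((E (u (j + 1) - 1) : ℕ) : ZMod k) = -(j : ZMod k))
    (hc : ∀ j : ℕ, j < s → B (-(j : ZMod k)) = ((E (u j) : ℕ) : ZMod k))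
    (hfix : ∀ x : ℕ, 1 ≤ x → x ≤ E n → (∀ i, 1 ≤ i → i < n → E i ≠ x) → B (x : ZMod k) = x)
    (C1 : ∀ y, 1 < y → ∀ hy : y ∣ k,
      ∃ z : ZMod k, ZMod.castHom hy (ZMod y) (B z) ≠ ZMod.castHom hy (ZMod y) z)
    (C2 : ∃ z : ZMod k, B z ≠ z + 1) : False := by
  have hsn := h.s_add_two_le
  have hu1n : u 1 ≤ n := by rw [← h.ulast]; exact h.u_mono h.hs le_rfl
  have hu1 := h.u1
  have hk0 : NeZero k := ⟨by omega⟩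
  -- interior positions are fixed
  have hint : ∀ i, i + 1 < n → ∀ x, E i < x → x < E (i + 1) → B (x : ZMod k) = x := by
    intro i hi x h1 h2
    apply hfix x (by omega)
    · have := h.E_mono (a := i + 1) (b := n) hi.le le_rfl
      omega
    · intro i' _ hi' he
      rcases Nat.lt_or_ge i i' with hl | hl
      · have := h.E_mono (a := i + 1) (b := i') hl hi'.le
        omega
      · have := h.E_mono (a := i') (b := i) hl (by omega)
        omega
  -- terminals are shorter than k
  have hterm : ∀ i, i + 1 < n → E (i + 1) < E i + k := by
    intro i hi
    by_contra hcon
    push Not at hcon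
    have hall : ∀ x : ℕ, E i < x → x < E i + k → B (x : ZMod k) = x := by
      intro x h1 h2
      exact hint i hi x h1 (by omega)
    have hrep : ∀ z : ZMod k, ∃ x : ℕ, E i ≤ x ∧ x < E i + k ∧ (x : ZMod k) = z := by
      intro z
      refine ⟨E i + (z - ((E i : ℕ) : ZMod k)).val, by omega, ?_, ?_⟩
      · have := ZMod.val_lt (z - ((E i : ℕ) : ZMod k))
        omega
      · push_cast
        rw [ZMod.natCast_zmod_val]
        ring
    have hid : ∀ z, B z = z := by
      intro z
      by_contra hz
      obtain ⟨x, h1, h2, h3⟩ := hrep z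
      obtain ⟨x', h1', h2', h3'⟩ := hrep (B z)
      by_cases hx : E i < x
      · exact hz (by rw [← h3]; exact hall x hx h2)
      · by_cases hx' : E i < x'
        · have e1 := hall x' hx' h2'
          rw [h3'] at e1
          exact hz (hinj e1)
        · have : x = x' := by omega
          subst this
          exact hz (h3'.symm.trans h3)
    obtain ⟨z, hz⟩ := C1 k hk1 dvd_rfl
    exact hz (by rw [hid])
  -- step congruence
  have hstep : ∀ a b : ℕ, 1 ≤ a → a < k → 1 ≤ b → b < k → (a : ZMod k) = b → a = b := by
    intro a b ha hak hb hbk he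
    rcases le_total a b with hl | hl
    · exact cast_eq_of_lt he hl (by omega)
    · exact (cast_eq_of_lt he.symm hl (by omega)).symm
  -- the first white cycle
  set q := u 1 with hq
  have hBE : ∀ i, i + 1 < q → B ((E i : ℕ) : ZMod k) = ((E (i + 1) : ℕ) : ZMod k) := by
    intro i hi
    rcases Nat.eq_zero_or_pos i with h0 | h0
    · subst h0
      have := hc 0 h.hs
      rw [h.u0] at this
      simpa [h.E0] using this
    · exact hE 0 h.hs i (by rw [h.u0]; exact h0) hi
  have hBlast : B ((E (q - 1) : ℕ) : ZMod k) = 0 := by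
    have := hf 0 h.hs
    simpa using this
  have hiter : ∀ i, i < q → B^[i] 0 = ((E i : ℕ) : ZMod k) := by
    intro i
    induction i with
    | zero => intro _; simp [h.E0]
    | succ i ih =>
      intro hi
      rw [Function.iterate_succ_apply', ih (by omega), hBE i hi]
  have hper : Function.IsPeriodicPt B q 0 := by
    show B^[q] 0 = 0
    have : q = (q - 1) + 1 := by omega
    rw [this, Function.iterate_succ_apply', hiter _ (by omega), hBlast]
  have hE1 : ((E 1 : ℕ) : ZMod k) ≠ 0 := by
    intro h0
    have h1 := h.E_strict (a := 0) (b := 1) (by omega) (by omega)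
    have h2 := hterm 0 (by omega)
    rw [h.E0] at h1 h2
    simp only [zero_add] at h2
    rw [ZMod.natCast_eq_zero_iff] at h0
    have := Nat.eq_zero_of_dvd_of_lt h0 (by omega)
    omega
  have hB0 : B 0 ≠ 0 := by
    have := hiter 1 (by omega)
    simp only [Function.iterate_one] at this
    rw [this]; exact hE1
  set e := Function.minimalPeriod B 0 with he
  have hedvd : e ∣ q := hper.minimalPeriod_dvd
  have hepos : 0 < e := hper.minimalPeriod_pos (by omega)
  have he2 : 2 ≤ e := by
    by_contra hcon
    have he1 : e = 1 := by omega
    have := Function.isPeriodicPt_minimalPeriod B 0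
    rw [← he, he1] at this
    exact hB0 this
  have hper_e : B^[e] 0 = 0 := Function.isPeriodicPt_minimalPeriod B 0
  -- no terminal at a spine index in the first window
  have hnu : ∀ i, 1 ≤ i → i < q → ∀ j, 1 ≤ j → j ≤ s → u j ≠ i := by
    intro i hi hiq j hj hjs hji
    have := h.u_mono hj hjs
    omega
  have hconst : ∀ m y, (∀ i, i < m → i + 1 < q → E (i + 1) - E i = y) → ∀ i, i ≤ m → i < q →
      E i = i * y := by
    intro m y hy i
    induction i with
    | zero => intro _ _; simp [h.E0]
    | succ i ih =>
      intro him hiq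
      have h1 := ih (by omega) (by omega)
      have h2 := hy i (by omega) hiq
      have h3 := h.Elt i (by omega)
      have : E (i + 1) = E i + y := by omega
      rw [this, h1]; ring
  rcases Nat.lt_or_ge e q with hlt | hge
  · -- case (a)
    have h2e : 2 * e ≤ q := by
      obtain ⟨c, hc'⟩ := hedvd
      have : 2 ≤ c := by
        by_contra hcon
        have : c = 0 ∨ c = 1 := by omega
        rcases this with rfl | rfl <;> omega
      rw [hc']; nlinarith
    have hEe : ((E e : ℕ) : ZMod k) = 0 := by rw [← hiter e hlt, hper_e]
    have hEe1 : ((E (e + 1) : ℕ) : ZMod k) = (E 1 : ℕ) := by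
      rw [← hBE e (by omega), hEe, ← hiter 1 (by omega)]; rfl
    set y := E 1 with hy
    have hyk : y < k := by
      have := hterm 0 (by omega)
      rw [h.E0] at this; simpa using this
    have hy1 : 1 ≤ y := by
      have := h.Elt 0 (by omega)
      simp only [zero_add] at this
      omega
    have hlastst : E (e + 1) - E e = y := by
      have h1 := h.Elt e (by omega)
      have h2 := hterm e (by omega)
      apply hstep _ _ (by omega) (by omega) hy1 hyk
      rw [Nat.cast_sub h1.le, hEe1, hEe, sub_zero]
    have hsteps : ∀ i, i < e + 1 → i + 1 < q → E (i + 1) - E i = y := by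
      intro i hi hiq
      have s1 := h.sorted 1 (i + 1) le_rfl (by omega) (by omega) (hnu _ (by omega) (by omega))
        (hnu _ (by omega) hiq)
      have s2 := h.sorted (i + 1) (e + 1) (by omega) (by omega) (by omega)
        (hnu _ (by omega) hiq) (hnu _ (by omega) (by omega))
      simp only [Nat.add_sub_cancel, Nat.sub_self, h.E0] at s1 s2
      omega
    have hEi : ∀ i, i ≤ e + 1 → E i = i * y := fun i hi =>
      hconst (e + 1) y hsteps i hi (by omega)
    have hke : k ∣ e * y := by
      rw [← hEi e (by omega), ← ZMod.natCast_eq_zero_iff]; exact hEe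
    have hkle : k ≤ e * y := Nat.le_of_dvd (by positivity) hke
    -- classification of positions
    have hpos : ∀ x : ℕ, 1 ≤ x → x ≤ k →
        (B (x : ZMod k) = x ∧ ¬ y ∣ x) ∨ (B (x : ZMod k) = ((x + y : ℕ) : ZMod k) ∧ y ∣ x) := by
      intro x hx1 hxk
      obtain ⟨i, hi, h1, h2⟩ := h.locate_E (m := e) hx1 (by rw [hEi e (by omega)]; omega)
      rcases h2.lt_or_eq with h3 | h3
      · left
        refine ⟨hint i (by omega) x h1 h3, ?_⟩
        rw [hEi i (by omega)] at h1
        rw [hEi (i + 1) (by omega)] at h3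
        rintro ⟨c, rfl⟩
        have a1 : i < c := by
          by_contra hcon
          have : y * c ≤ i * y := by rw [mul_comm]; exact Nat.mul_le_mul_right _ (by omega)
          omega
        have a2 : (i + 1) * y ≤ y * c := by
          rw [mul_comm y c]; exact Nat.mul_le_mul_right _ (by omega)
        omega
      · right
        refine ⟨?_, ?_⟩
        · rw [h3, hBE (i + 1) (by omega), hEi (i + 1 + 1) (by omega), hEi (i + 1) (by omega)]
          congr 1; ring
        · rw [h3, hEi (i + 1) (by omega)]; exact Dvd.intro_left _ rfl
    have hrep : ∀ z : ZMod k, ∃ x : ℕ, 1 ≤ x ∧ x ≤ k ∧ (x : ZMod k) = z := by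
      intro z
      refine ⟨1 + (z - 1).val, by omega, ?_, ?_⟩
      · have := ZMod.val_lt (z - 1)
        omega
      · push_cast
        rw [ZMod.natCast_zmod_val]
        ring
    have hyk' : y ∣ k := by
      rcases hpos k (by omega) le_rfl with ⟨h1, _⟩ | ⟨_, h1⟩
      · simp only [CharP.cast_eq_zero] at h1
        exact absurd h1 hB0
      · exact h1
    rcases Nat.lt_or_ge 1 y with hy' | hy'
    · obtain ⟨z, hz⟩ := C1 y hy' hyk'
      obtain ⟨x, hx1, hx2, rfl⟩ := hrep z
      apply hz
      rcases hpos x hx1 hx2 with ⟨h1, _⟩ | ⟨h1, _⟩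
      · rw [h1]
      · rw [h1, map_natCast, map_natCast]; push_cast; simp
    · have hy1' : y = 1 := by omega
      obtain ⟨z, hz⟩ := C2
      obtain ⟨x, hx1, hx2, rfl⟩ := hrep z
      apply hz
      rcases hpos x hx1 hx2 with ⟨_, h1⟩ | ⟨h1, _⟩
      · rw [hy1'] at h1; exact absurd (one_dvd _) h1
      · rw [h1, hy1']; simp
  · -- case (b)
    have heq : e = q := le_antisymm (Nat.le_of_dvd (by omega) hedvd) hge
    have hmod : ∀ m, ∃ r, r < q ∧ B^[m] 0 = ((E r : ℕ) : ZMod k) := by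
      intro m
      refine ⟨m % q, Nat.mod_lt _ (by omega), ?_⟩
      rw [← hiter _ (Nat.mod_lt _ (by omega)), ← heq]
      exact (Function.iterate_mod_minimalPeriod_eq).symm
    have hdv : ∀ m, B^[m] 0 = 0 → q ∣ m := by
      intro m hm
      rw [← heq]
      exact Function.IsPeriodicPt.minimalPeriod_dvd hm
    have hcinj : ∀ i, i < q → ((E i : ℕ) : ZMod k) = 0 → i = 0 := by
      intro i hi h0
      rw [← hiter i hi] at h0
      exact Nat.eq_zero_of_dvd_of_lt (hdv i h0) hi
    -- orbits along other white vertices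
    have hit : ∀ j, j < s → ∀ r, u j + r < u (j + 1) →
        B^[r] ((E (u j) : ℕ) : ZMod k) = ((E (u j + r) : ℕ) : ZMod k) := by
      intro j hj r
      induction r with
      | zero => intro _; simp
      | succ r ih =>
        intro hr
        rw [Function.iterate_succ_apply', ih (by omega), hE j hj _ (by omega) (by omega)]
        rfl
    have hjper : ∀ j, j < s → B^[u (j + 1) - u j + 1] (-(j : ZMod k)) = -(j : ZMod k) := by
      intro j hj
      have h1 := h.ult j hj
      rw [Function.iterate_succ_apply, hc j hj]
      have e1 : u (j + 1) - u j = (u (j + 1) - u j - 1) + 1 := by omega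
      rw [e1, Function.iterate_succ_apply', hit j hj _ (by omega)]
      have e2 : u j + (u (j + 1) - u j - 1) = u (j + 1) - 1 := by omega
      rw [e2, hf j hj]
    have hjper' : ∀ j, j < s → B^[u (j + 1) - u j + 1] ((E (u j) : ℕ) : ZMod k)
        = ((E (u j) : ℕ) : ZMod k) := by
      intro j hj
      rw [← hc j hj, ← Function.iterate_succ_apply, Function.iterate_succ_apply', hjper j hj]
    have hjper'' : ∀ j, j < s → ∀ i, u j ≤ i → i < u (j + 1) →
        B^[u (j + 1) - u j + 1] ((E i : ℕ) : ZMod k) = ((E i : ℕ) : ZMod k) := by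
      intro j hj i h1 h2
      obtain ⟨r, rfl⟩ := Nat.exists_eq_add_of_le h1
      rw [← hit j hj r h2, ← Function.iterate_add_apply, add_comm, Function.iterate_add_apply,
        hjper' j hj]
    have horb : ∀ j, j < s → ∀ i, u j ≤ i → i < u (j + 1) → ((E i : ℕ) : ZMod k) = 0 →
        ∃ r, r < q ∧ ((E (u j) : ℕ) : ZMod k) = ((E r : ℕ) : ZMod k) := by
      intro j hj i h1 h2 h0
      obtain ⟨r, rfl⟩ := Nat.exists_eq_add_of_le h1
      rw [← hit j hj r h2] at h0
      have e1 : u (j + 1) - u j + 1 = (u (j + 1) - u j + 1 - r) + r := by omega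
      have e2 := hjper' j hj
      rw [e1, Function.iterate_add_apply, h0] at e2
      obtain ⟨r', hr', e3⟩ := hmod (u (j + 1) - u j + 1 - r)
      exact ⟨r', hr', by rw [← e2, e3]⟩
    have hYk : E (q - 1) < k := by
      by_contra hcon
      push Not at hcon
      obtain ⟨i, hi, h1, h2⟩ := h.locate_E (m := q - 1) (x := k) (by omega) hcon
      rcases h2.lt_or_eq with h3 | h3
      · have := hint i (by omega) k h1 h3
        simp only [CharP.cast_eq_zero] at this
        exact hB0 this
      · have := hcinj (i + 1) (by omega) (by rw [← h3]; simp)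
        omega
    have hEn : n - 1 ≤ E n := by
      have h1 := h.E_add (a := 0) (b := n - 1) (by omega) (by omega)
      have h2 := h.E_mono (a := n - 1) (b := n) (by omega) le_rfl
      rw [h.E0] at h1
      omega
    have hElast := h.Elast
    have hmul : ∀ x : ℕ, 1 ≤ x → x ≤ E n → (x : ZMod k) = 0 → ∃ i, 1 ≤ i ∧ i < n ∧ E i = x := by
      intro x h1 h2 h3
      by_contra hcon
      push Not at hcon
      have := hfix x h1 h2 hcon
      rw [h3] at this
      exact hB0 this
    obtain ⟨i, hi1, hin, hik⟩ := hmul k (by omega) (by omega) (by simp)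
    obtain ⟨j, hj, hji, hij⟩ := h.locate_u hi1 hin
    have hiq : q ≤ i := by
      by_contra hcon
      have := h.E_mono (a := i) (b := q - 1) (by omega) (by omega)
      omega
    have hj1 : 1 ≤ j := by
      by_contra hcon
      have : j = 0 := by omega
      subst this
      simp only [zero_add] at hij
      omega
    have hEi0 : ((E i : ℕ) : ZMod k) = 0 := by rw [hik]; simp
    have hquj : q ≤ u j := h.u_mono hj1 hj.le
    have hYlt : ∀ m, q ≤ m → m < n → E (q - 1) < E m := by
      intro m h1 h2
      exact h.E_strict (by omega) h2
    obtain ⟨r, hr, her⟩ := horb j hj i hji hij hEi0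
    have hErY : E r ≤ E (q - 1) := h.E_mono (by omega) (by omega)
    have hEuj : E (u j) = k := by
      have h1 := hYlt (u j) hquj (by omega)
      have h2 : E (u j) ≤ k := by rw [← hik]; exact h.E_mono hji hin.le
      by_contra hcon
      have := cast_eq_of_lt her.symm (by omega) (by omega)
      omega
    have hqdvd : ∀ j', j' < s → ∀ i', u j' ≤ i' → i' < u (j' + 1) → ((E i' : ℕ) : ZMod k) = 0 →
        q ∣ u (j' + 1) - u j' + 1 := by
      intro j' hj' i' h1 h2 h0
      apply hdv
      have := hjper'' j' hj' i' h1 h2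
      rwa [h0] at this
    have hQle : ∀ j', j' < s → u (j' + 1) - u j' + 1 ≤ q := by
      intro j' hj'
      have := h.anti 0 j' (by omega) hj'
      rw [h.u0] at this
      simp only [zero_add] at this
      omega
    have hQj : u (j + 1) - u j + 1 = q :=
      le_antisymm (hQle j hj) (Nat.le_of_dvd (by omega) (hqdvd j hj i hji hij hEi0))
    have hujn : u (j + 1) ≤ n := by rw [← h.ulast]; exact h.u_mono hj le_rfl
    -- the steps of the first window are equal
    set y := E 1 with hy
    have hyk : y < k := by
      have := hterm 0 (by omega)
      rw [h.E0] at this; simpa using this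
    have hy1 : 1 ≤ y := by
      have := h.Elt 0 (by omega)
      simp only [zero_add] at this
      omega
    have hlastst : E (u j + 1) - E (u j) = y := by
      have h1 := h.Elt (u j) (by omega)
      have h2 := hterm (u j) (by omega)
      apply hstep _ _ (by omega) (by omega) hy1 hyk
      rw [Nat.cast_sub h1.le, ← hE j hj (u j) le_rfl (by omega), hEuj]
      have := hiter 1 (by omega)
      simp only [Function.iterate_one] at this
      simpa using this
    have hsteps : ∀ i, i < q → i + 1 < q → E (i + 1) - E i = y := by
      intro i hi hiq
      have s1 := h.sorted 1 (i + 1) le_rfl (by omega) (by omega) (hnu _ (by omega) (by omega))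
        (hnu _ (by omega) hiq)
      have s2 := h.sorted (i + 1) (u j + 1) (by omega) (by omega) (by omega)
        (hnu _ (by omega) hiq) (h.u_between hj (by omega) (by omega))
      simp only [Nat.add_sub_cancel, Nat.sub_self, h.E0] at s1 s2
      omega
    have hEi : ∀ i, i < q → E i = i * y := fun i hi => hconst q y hsteps i hi.le hi
    have hYj : k ∣ E (q - 1) + j := by
      have h1 : B (-(j : ZMod k)) = B ((E (q - 1) : ℕ) : ZMod k) := by
        rw [hBlast, hc j hj, hEuj]; simp
      have h2 := hinj h1
      rw [← ZMod.natCast_eq_zero_iff]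
      push_cast
      rw [← h2]; ring
    have hu2 : ∀ m, 1 ≤ m → m ≤ j → u 1 + 2 * (m - 1) ≤ u m := by
      intro m hm
      induction m, hm using Nat.le_induction with
      | base => intro _; simp
      | succ m hm ih =>
        intro hmj
        have h1 := ih (by omega)
        have h2 := h.anti m j (by omega) hj
        omega
    have hkY : k = E (q - 1) + 1 ∧ j = 1 := by
      have h1 := hu2 j hj1 le_rfl
      have h2 := h.E_add (a := q - 1) (b := u j) (by omega) (by omega)
      have h3 := Nat.le_of_dvd (by omega) hYj
      omega
    obtain ⟨hkY, hj1'⟩ := hkY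
    subst hj1'
    have hY : E (q - 1) = (q - 1) * y := hEi _ (by omega)
    rcases Nat.lt_or_ge 1 y with hy' | hy'
    swap
    · have hy1' : y = 1 := by omega
      obtain ⟨z, hz⟩ := C2
      apply hz
      have hz1 : ((z.val : ℕ) : ZMod k) = z := ZMod.natCast_zmod_val z
      have hz2 := ZMod.val_lt z
      have hid : ∀ i, i < q → E i = i := by
        intro i hi; rw [hEi i hi, hy1', mul_one]
      have hkq : k = q := by rw [hkY, hid (q - 1) (by omega)]; omega
      rcases Nat.lt_or_ge (z.val + 1) q with h1 | h1
      · have := hBE z.val h1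
        rw [hid _ (by omega), hid _ h1, hz1] at this
        rw [this]; push_cast; rw [hz1]
      · have h2 : z.val = q - 1 := by omega
        have := hBlast
        rw [hid _ (by omega), ← h2, hz1] at this
        rw [this]
        have h3 : ((z.val + 1 : ℕ) : ZMod k) = 0 := by
          rw [h2, hkq]
          have : q - 1 + 1 = q := by omega
          rw [this]; simp
        push_cast at h3
        rw [hz1] at h3
        exact h3.symm
    · -- some third large white vertex
      have hbig : ∃ j', 2 ≤ j' ∧ j' < s ∧ q ∣ u (j' + 1) - u j' + 1 := by
        rcases Nat.lt_or_ge (E n) (2 * k) with h2k | h2k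
        · refine ⟨d - 2 * k, by omega, by omega, ?_⟩
          have hz : -((d - 2 * k : ℕ) : ZMod k) = 0 := by
            rw [neg_eq_zero, ZMod.natCast_eq_zero_iff]
            exact Nat.dvd_sub hkd (Dvd.intro_left _ rfl)
          have := hjper (d - 2 * k) (by omega)
          rw [hz] at this
          exact hdv _ this
        · have h0 : ((2 * k : ℕ) : ZMod k) = 0 := by push_cast; simp
          obtain ⟨i', hi1', hin', hik'⟩ := hmul (2 * k) (by omega) h2k h0
          obtain ⟨j', hj', hji', hij'⟩ := h.locate_u hi1' hin'
          refine ⟨j', ?_, hj', hqdvd j' hj' i' hji' hij' (by rw [hik']; exact h0)⟩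
          by_contra hcon
          have hcases : j' = 0 ∨ j' = 1 := by omega
          rcases hcases with rfl | rfl
          · simp only [zero_add] at hij'
            have := h.E_mono (a := i') (b := q - 1) (by omega) (by omega)
            omega
          · obtain ⟨r', rfl⟩ := Nat.exists_eq_add_of_le hji'
            have h3 := hit 1 hj' r' hij'
            rw [hik', h0, hEuj] at h3
            simp only [CharP.cast_eq_zero] at h3
            rw [hiter r' (by omega)] at h3
            have := hcinj r' (by omega) h3
            subst this
            rw [add_zero] at hik'
            omega
      obtain ⟨j', hj2, hjs', hqd⟩ := hbig
      have h1 := Nat.le_of_dvd (by omega) hqd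
      have h2 := h.anti 2 j' hj2 hjs'
      have hu3 : u (2 + 1) ≤ n := by rw [← h.ulast]; exact h.u_mono (by omega) le_rfl
      have h3 : B ((E (q - 1) - 1 : ℕ) : ZMod k) = ((E (q - 1) - 1 : ℕ) : ZMod k) := by
        have e1 := hsteps (q - 2) (by omega) (by omega)
        have e2 : q - 2 + 1 = q - 1 := by omega
        rw [e2] at e1
        apply hint (q - 2) (by omega)
        · omega
        · rw [e2]; omega
      have h4 : -((2 : ℕ) : ZMod k) = ((E (q - 1) - 1 : ℕ) : ZMod k) := by
        have : ((E (q - 1) - 1 + 2 : ℕ) : ZMod k) = 0 := by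
          have e : E (q - 1) - 1 + 2 = k := by
            have : 1 ≤ E (q - 1) := by rw [hY]; exact Nat.mul_pos (by omega) hy1
            omega
          rw [e]; simp
        rw [Nat.cast_add] at this
        rw [neg_eq_iff_add_eq_zero, add_comm]; exact this
      have h5 := hc 2 (by omega)
      rw [h4, h3] at h5
      have h6 := hE 2 (by omega) (u 2) le_rfl (by omega)
      rw [← h5, h3, h5] at h6
      have h7 := h.Elt (u 2) (by omega)
      have h8 := hterm (u 2) (by omega)
      have := cast_eq_of_lt h6 h7.le h8
      omega

theorem perm_of_rel {X : Type*} [Finite X] (R : X → X → Prop)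
    (hfun : ∀ x y y', R x y → R x y' → y = y') (hsurj : ∀ y, ∃ x, R x y) :
    ∃ σ : Equiv.Perm X, ∀ x y, R x y → σ x = y := by
  choose g hg using hsurj
  have hginj : Function.Injective g := by
    intro y y' h
    have h1 := hg y
    rw [h] at h1
    exact hfun _ _ _ h1 (hg y')
  let τ : Equiv.Perm X := Equiv.ofBijective g (Finite.injective_iff_bijective.1 hginj)
  refine ⟨τ⁻¹, ?_⟩
  intro x y hxy
  have h1 : τ (τ⁻¹ x) = x := by simp
  have h2 := hg (τ⁻¹ x)
  have h3 : g (τ⁻¹ x) = x := h1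
  rw [h3] at h2
  exact hfun _ _ _ h2 hxy

theorem zrep {d : ℕ} (hd : 0 < d) (x : ZMod d) : ∃ a : ℕ, 1 ≤ a ∧ a ≤ d ∧ (a : ZMod d) = x := by
  have : NeZero d := ⟨by omega⟩
  refine ⟨1 + (x - 1).val, by omega, ?_, ?_⟩
  · have := ZMod.val_lt (x - 1)
    omega
  · push_cast
    rw [ZMod.natCast_zmod_val]
    ring

theorem zinj {d a b : ℕ} (h : (a : ZMod d) = (b : ZMod d)) (ha : 1 ≤ a) (ha' : a ≤ d)
    (hb : 1 ≤ b) (hb' : b ≤ d) : a = b := by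
  rcases le_total a b with hl | hl
  · exact cast_eq_of_lt h hl (by omega)
  · exact (cast_eq_of_lt h.symm hl (by omega)).symm

theorem zneg {d j : ℕ} (h : j ≤ d) : -(j : ZMod d) = ((d - j : ℕ) : ZMod d) := by
  rw [Nat.cast_sub h]; simp

/-- the relation defining `β` on positions. -/
inductive BRel (d s n : ℕ) (u E : ℕ → ℕ) : ℕ → ℕ → Prop
  | step (j i : ℕ) (hj : j < s) (h1 : u j ≤ i) (h2 : i + 1 < u (j + 1)) :
      BRel d s n u E (E i) (E (i + 1))
  | last (j : ℕ) (hj : j < s) : BRel d s n u E (E (u (j + 1) - 1)) (d - j)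
  | first (j : ℕ) (hj : j < s) : BRel d s n u E (d - j) (E (u j))
  | fixed (x : ℕ) (h1 : 1 ≤ x) (h2 : x ≤ E n) (h3 : ∀ i, 1 ≤ i → i < n → E i ≠ x) :
      BRel d s n u E x x

namespace Layout
variable {d s n : ℕ} {u E : ℕ → ℕ}

theorem u_lt (h : Layout d s n u E) {j : ℕ} (hj : j < s) : u j < n := by
  rw [← h.ulast]; exact h.u_strict hj le_rfl

theorem u_le (h : Layout d s n u E) {j : ℕ} (hj : j ≤ s) : u j ≤ n := by
  rw [← h.ulast]; exact h.u_mono hj le_rfl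

theorem u_inj (h : Layout d s n u E) {a b : ℕ} (ha : a ≤ s) (hb : b ≤ s) (he : u a = u b) :
    a = b := by
  rcases lt_trichotomy a b with hl | hl | hl
  · have := h.u_strict hl hb
    omega
  · exact hl
  · have := h.u_strict hl ha
    omega

theorem E_pos (h : Layout d s n u E) {i : ℕ} (h1 : 1 ≤ i) (h2 : i < n) : 1 ≤ E i := by
  have := h.E_strict (a := 0) h1 h2
  omega

theorem E_le (h : Layout d s n u E) {i : ℕ} (h2 : i ≤ n) : E i ≤ E n := h.E_mono h2 le_rfl

theorem brel_fun (h : Layout d s n u E) {x y y' : ℕ} (h1 : BRel d s n u E x y)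
    (h2 : BRel d s n u E x y') : y = y' := by
  have hl := h.Elast
  generalize hxx : x = x' at h2
  rcases h1 with ⟨j, i, hj, a1, a2⟩ | ⟨j, hj⟩ | ⟨j, hj⟩ | ⟨x, a1, a2, a3⟩ <;>
  rcases h2 with ⟨j', i', hj', b1, b2⟩ | ⟨j', hj'⟩ | ⟨j', hj'⟩ | ⟨x', b1, b2, b3⟩
  all_goals
    try have p0 := h.u_pos hj.le
    try have p1 := h.u_pos hj'.le
    try have p2 := h.u_le (j := j + 1) hj
    try have p3 := h.u_le (j := j' + 1) hj'
    try have p4 := h.ult j hj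
    try have p5 := h.ult j' hj'
  · have := h.E_inj (by omega) (by omega) hxx
    rw [this]
  · have := h.E_inj (by omega) (by omega) hxx
    exact absurd (by omega) (h.u_between hj (i := i + 1) (by omega) a2 (j' + 1) (by omega) hj')
  · have := h.E_le (i := i) (by omega)
    omega
  · exact absurd hxx (b3 i (by omega) (by omega))
  · have := h.E_inj (by omega) (by omega) hxx
    exact absurd (by omega) (h.u_between hj' (i := i' + 1) (by omega) b2 (j + 1) (by omega) hj)
  · have := h.E_inj (by omega) (by omega) hxx
    have := h.u_inj (a := j + 1) (b := j' + 1) hj hj' (by omega)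
    omega
  · have := h.E_le (i := u (j + 1) - 1) (by omega)
    omega
  · exact absurd hxx (b3 _ (by omega) (by omega))
  · have := h.E_le (i := i') (by omega)
    omega
  · have := h.E_le (i := u (j' + 1) - 1) (by omega)
    omega
  · have : j = j' := by omega
    rw [this]
  · omega
  · exact absurd hxx.symm (a3 i' (by omega) (by omega))
  · exact absurd hxx.symm (a3 _ (by omega) (by omega))
  · omega
  · exact hxx

theorem brel_surj (h : Layout d s n u E) {y : ℕ} (h1 : 1 ≤ y) (h2 : y ≤ d) :
    ∃ x, BRel d s n u E x y := by
  have hl := h.Elast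
  by_cases hy : y ≤ E n
  · by_cases hE : ∃ i, 1 ≤ i ∧ i < n ∧ E i = y
    · obtain ⟨i, hi1, hin, rfl⟩ := hE
      obtain ⟨j, hj, hji, hij⟩ := h.locate_u hi1 hin
      rcases hji.lt_or_eq with hlt | heq
      · refine ⟨E (i - 1), ?_⟩
        have e : i = i - 1 + 1 := by omega
        have := BRel.step (d := d) (s := s) (n := n) (u := u) (E := E) j (i - 1) hj (by omega)
          (by omega)
        rwa [← e] at this
      · rw [← heq]; exact ⟨_, BRel.first j hj⟩
    · push Not at hE
      exact ⟨y, BRel.fixed y h1 hy hE⟩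
  · have := BRel.last (d := d) (s := s) (n := n) (u := u) (E := E) (d - y) (by omega)
    have e : d - (d - y) = y := by omega
    rw [e] at this
    exact ⟨_, this⟩

theorem brel_range (h : Layout d s n u E) {x y : ℕ} (h1 : BRel d s n u E x y) :
    (1 ≤ x ∧ x ≤ d) ∧ 1 ≤ y ∧ y ≤ d := by
  have hl := h.Elast
  have key : ∀ i, 1 ≤ i → i < n → 1 ≤ E i ∧ E i ≤ d := by
    intro i h1 h2
    have := h.E_pos h1 h2
    have := h.E_le h2.le
    omega
  have hn := h.s_add_two_le
  have key0 : E (n - 1) ≤ E n := h.E_le (by omega)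
  have key0' := h.E_pos (i := n - 1) (by omega) (by omega)
  rcases h1 with ⟨j, i, hj, a1, a2⟩ | ⟨j, hj⟩ | ⟨j, hj⟩ | ⟨x, a1, a2, a3⟩
  all_goals
    try have p0 := h.u_pos hj.le
    try have p2 := h.u_le (j := j + 1) hj
    try have p4 := h.ult j hj
  · exact ⟨key i (by omega) (by omega), key (i + 1) (by omega) (by omega)⟩
  · exact ⟨key _ (by omega) (by omega), by omega, by omega⟩
  · exact ⟨⟨by omega, by omega⟩, key _ (by omega) (by omega)⟩
  · omega

theorem exists_beta (h : Layout d s n u E) : ∃ β : Equiv.Perm (ZMod d),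
    ∀ x y : ℕ, BRel d s n u E x y → β (x : ZMod d) = y := by
  have hl := h.Elast
  have hs := h.hs
  have : NeZero d := ⟨by omega⟩
  obtain ⟨β, hβ⟩ := perm_of_rel (X := ZMod d)
    (fun x y => ∃ a b : ℕ, (a : ZMod d) = x ∧ (b : ZMod d) = y ∧ BRel d s n u E a b) (by
      rintro x y y' ⟨a, b, rfl, rfl, hab⟩ ⟨a', b', he, rfl, hab'⟩
      have r1 := h.brel_range hab
      have r2 := h.brel_range hab'
      have := zinj he r2.1.1 r2.1.2 r1.1.1 r1.1.2
      subst this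
      rw [h.brel_fun hab hab']) (by
      intro y
      obtain ⟨b, hb1, hb2, rfl⟩ := zrep (by omega) y
      obtain ⟨a, ha⟩ := h.brel_surj hb1 hb2
      exact ⟨a, a, b, rfl, rfl, ha⟩)
  exact ⟨β, fun x y hxy => hβ _ _ ⟨x, y, rfl, rfl, hxy⟩⟩

end Layout

open Equiv Equiv.Perm in
theorem cycleType_of_seq {X ι : Type*} [Fintype X] [DecidableEq X] [Fintype ι]
    (σ : Perm X) (m : ι → ℕ) (x : ι → ℕ → X) (hm : ∀ i, 1 ≤ m i)
    (hsucc : ∀ i r, r + 1 < m i → σ (x i r) = x i (r + 1))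
    (hlast : ∀ i, σ (x i (m i - 1)) = x i 0)
    (hinj : ∀ i r i' r', r < m i → r' < m i' → x i r = x i' r' → i = i' ∧ r = r')
    (hfix : ∀ y, (∀ i r, r < m i → x i r ≠ y) → σ y = y) :
    σ.cycleType = ((Finset.univ : Finset ι).val.map m).filter (2 ≤ ·) := by
  classical
  have hpow : ∀ i r, r < m i → (σ ^ r) (x i 0) = x i r := by
    intro i r
    induction r with
    | zero => intro _; simp
    | succ r ih =>
      intro hr
      rw [pow_succ', Perm.mul_apply, ih (by omega), hsucc i r hr]
  have hall : ∀ i (r : ℕ), ∃ r', r' < m i ∧ (σ ^ r) (x i 0) = x i r' := by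
    intro i r
    induction r with
    | zero => exact ⟨0, hm i, by simp⟩
    | succ r ih =>
      obtain ⟨r', hr', he⟩ := ih
      rw [pow_succ', Perm.mul_apply, he]
      rcases Nat.lt_or_ge (r' + 1) (m i) with hl | hl
      · exact ⟨r' + 1, hl, hsucc i r' hl⟩
      · have : r' = m i - 1 := by omega
        exact ⟨0, hm i, by rw [this, hlast]⟩
  have hsame : ∀ i y, σ.SameCycle (x i 0) y ↔ ∃ r, r < m i ∧ x i r = y := by
    intro i y
    constructor
    · intro hs
      obtain ⟨r, -, hr⟩ := hs.exists_pow_eq'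
      obtain ⟨r', h1, h2⟩ := hall i r
      exact ⟨r', h1, by rw [← h2, hr]⟩
    · rintro ⟨r, h1, rfl⟩
      exact ⟨r, by rw [zpow_natCast, hpow i r h1]⟩
  have hsupp0 : ∀ i, 2 ≤ m i → x i 0 ∈ σ.support := by
    intro i hi
    rw [Perm.mem_support, hsucc i 0 (by omega)]
    intro he
    have := (hinj i 1 i 0 (by omega) (by omega) he).2
    omega
  have hsupp : ∀ i, 2 ≤ m i → (σ.cycleOf (x i 0)).support = (Finset.range (m i)).image (x i) := by
    intro i hi
    ext y
    rw [mem_support_cycleOf_iff, hsame]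
    simp only [Finset.mem_image, Finset.mem_range, hsupp0 i hi, and_true]
  have hcard : ∀ i, 2 ≤ m i → (σ.cycleOf (x i 0)).support.card = m i := by
    intro i hi
    rw [hsupp i hi, Finset.card_image_of_injOn, Finset.card_range]
    intro a ha b hb hab
    exact (hinj i a i b (by simpa using ha) (by simpa using hb) hab).2
  have hfac : σ.cycleFactorsFinset =
      (Finset.univ.filter (fun i => 2 ≤ m i)).image (fun i => σ.cycleOf (x i 0)) := by
    ext c
    simp only [Finset.mem_image, Finset.mem_filter, Finset.mem_univ, true_and]
    constructor
    · intro hc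
      have hcy := (mem_cycleFactorsFinset_iff.1 hc).1
      obtain ⟨y, hy⟩ := hcy.nonempty_support
      have hcof := cycle_is_cycleOf hy hc
      have hyσ : y ∈ σ.support := mem_cycleFactorsFinset_support_le hc hy
      have : ∃ i r, r < m i ∧ x i r = y := by
        by_contra hcon
        push Not at hcon
        exact (Perm.mem_support.1 hyσ) (hfix y hcon)
      obtain ⟨i, r, hr, rfl⟩ := this
      have hsc := (hsame i (x i r)).2 ⟨r, hr, rfl⟩
      refine ⟨i, ?_, ?_⟩
      · by_contra hlt
        have h1 : m i = 1 := by have := hm i; omega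
        have h2 := hlast i
        rw [h1] at h2
        have h3 : r = 0 := by omega
        subst h3
        exact (Perm.mem_support.1 hyσ) h2
      · rw [hcof]; exact hsc.cycleOf_eq
    · rintro ⟨i, hi, rfl⟩
      exact cycleOf_mem_cycleFactorsFinset_iff.2 (hsupp0 i hi)
  rw [cycleType_def, hfac, Finset.image_val_of_injOn]
  · rw [Multiset.map_map, Finset.filter_val, Multiset.filter_map]
    apply Multiset.map_congr rfl
    intro i hi
    exact hcard i (Multiset.mem_filter.1 hi).2
  · intro i hi i' hi' he
    have hi := (Finset.mem_filter.1 hi).2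
    have hi' := (Finset.mem_filter.1 hi').2
    have h1 : x i 0 ∈ (σ.cycleOf (x i' 0)).support := by
      have he' : σ.cycleOf (x i 0) = σ.cycleOf (x i' 0) := he
      rw [← he', hsupp i hi]
      exact Finset.mem_image.2 ⟨0, by simp; omega, rfl⟩
    rw [hsupp i' hi'] at h1
    obtain ⟨r, hr, h2⟩ := Finset.mem_image.1 h1
    exact (hinj i' r i 0 (by simpa using hr) (by omega) h2).1.symm

theorem fullCycleType_eq {X : Type*} [Fintype X] [DecidableEq X] (σ : Equiv.Perm X)
    (D : Multiset ℕ) (hpos : ∀ x ∈ D, 0 < x) (hsum : D.sum = Fintype.card X)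
    (hc : σ.cycleType = D.filter (2 ≤ ·)) : fullCycleType σ = D := by
  have h1 := Multiset.filter_add_not (2 ≤ ·) D
  have h2 : D.filter (fun x => ¬ 2 ≤ x)
      = Multiset.replicate (Multiset.card (D.filter (fun x => ¬ 2 ≤ x))) 1 := by
    rw [Multiset.eq_replicate_card]
    intro b hb
    have hb' := Multiset.mem_filter.1 hb
    have := hpos b hb'.1
    omega
  have h3 : Fintype.card X - σ.support.card = Multiset.card (D.filter (fun x => ¬ 2 ≤ x)) := by
    rw [← Equiv.Perm.sum_cycleType, hc, ← hsum]
    have h4 := congrArg Multiset.sum h1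
    rw [Multiset.sum_add] at h4
    have h5 := congrArg Multiset.sum h2
    rw [Multiset.sum_replicate, smul_eq_mul, mul_one] at h5
    omega
  unfold fullCycleType
  rw [h3, ← h2, hc, h1]

theorem mem_fullCycleType {X : Type*} [Fintype X] [DecidableEq X] (σ : Equiv.Perm X) (p : ℕ)
    (hp : p ∈ fullCycleType σ) : ∃ x, (σ ^ p) x = x := by
  unfold fullCycleType at hp
  rcases Multiset.mem_add.1 hp with h | h
  · rw [Equiv.Perm.cycleType_def] at h
    obtain ⟨c, hc, rfl⟩ := Multiset.mem_map.1 h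
    have hc : c ∈ σ.cycleFactorsFinset := hc
    have hcy := (Equiv.Perm.mem_cycleFactorsFinset_iff.1 hc).1
    obtain ⟨y, hy⟩ := hcy.nonempty_support
    refine ⟨y, ?_⟩
    have hcof := Equiv.Perm.cycle_is_cycleOf hy hc
    have h1 := Equiv.Perm.cycleOf_pow_apply_self σ y c.support.card
    simp only [Function.comp]
    rw [← h1, ← hcof, ← hcy.orderOf, pow_orderOf_eq_one]
    rfl
  · have hp1 := Multiset.eq_of_mem_replicate h
    have hne : Fintype.card X - σ.support.card ≠ 0 := by
      intro h0
      rw [h0] at h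
      simp at h
    have : ∃ x, x ∉ σ.support := by
      by_contra hcon
      push Not at hcon
      have : σ.support = Finset.univ := Finset.eq_univ_iff_forall.2 hcon
      rw [this, Finset.card_univ] at hne
      omega
    obtain ⟨x, hx⟩ := this
    exact ⟨x, by rw [hp1, pow_one]; simpa using hx⟩

theorem grading_dvd {X : Type*} [Fintype X] [DecidableEq X] (σ : Equiv.Perm X) {k : ℕ}
    (g : X → ZMod k) (hg : ∀ x, g (σ x) = g x + 1) : k ∣ (fullCycleType σ).gcd := by
  rw [Multiset.dvd_gcd]
  intro p hp
  obtain ⟨x, hx⟩ := mem_fullCycleType σ p hp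
  have key : ∀ m : ℕ, g ((σ ^ m) x) = g x + m := by
    intro m
    induction m with
    | zero => simp
    | succ m ih =>
      rw [pow_succ', Equiv.Perm.mul_apply, hg, ih]
      push_cast; ring
  have := key p
  rw [hx] at this
  rw [← ZMod.natCast_eq_zero_iff]
  exact left_eq_add.1 this

namespace Layout
variable {d s n : ℕ} {u E : ℕ → ℕ}

theorem cycleType_beta (h : Layout d s n u E) [NeZero d] (β : Equiv.Perm (ZMod d))
    (hβ : ∀ x y : ℕ, BRel d s n u E x y → β (x : ZMod d) = y) :
    β.cycleType = ((Finset.univ : Finset (Fin s)).val.map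
      (fun j => u (j.1 + 1) - u j.1 + 1)).filter (2 ≤ ·) := by
  have hl := h.Elast
  have hn := h.s_add_two_le
  have key : ∀ i, 1 ≤ i → i < n → 1 ≤ E i ∧ E i ≤ E n := fun i h1 h2 =>
    ⟨h.E_pos h1 h2, h.E_le h2.le⟩
  apply cycleType_of_seq β _
    (fun j r => if r = 0 then ((d - j.1 : ℕ) : ZMod d) else ((E (u j.1 + (r - 1)) : ℕ) : ZMod d))
  · intro j; omega
  · rintro ⟨j, hj⟩ r hr
    simp only at hr ⊢
    rcases Nat.eq_zero_or_pos r with h0 | h0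
    · subst h0
      simp only [if_true, zero_add, one_ne_zero, if_false]
      exact hβ _ _ (BRel.first j hj)
    · rw [if_neg (by omega), if_neg (by omega)]
      have e : u j + (r + 1 - 1) = u j + (r - 1) + 1 := by omega
      rw [e]
      exact hβ _ _ (BRel.step j _ hj (by omega) (by omega))
  · rintro ⟨j, hj⟩
    have := h.ult j hj
    simp only [if_true]
    rw [if_neg (by omega)]
    have e : u j + (u (j + 1) - u j + 1 - 1 - 1) = u (j + 1) - 1 := by omega
    rw [e]
    exact hβ _ _ (BRel.last j hj)
  · rintro ⟨j, hj⟩ r ⟨j', hj'⟩ r' hr hr' he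
    simp only at hr hr' he
    simp only [Fin.mk.injEq]
    have p0 := h.u_pos hj.le
    have p1 := h.u_pos hj'.le
    have p2 := h.u_le (j := j + 1) hj
    have p3 := h.u_le (j := j' + 1) hj'
    have p4 := h.ult j hj
    have p5 := h.ult j' hj'
    split_ifs at he with h1 h2 h2
    · have := zinj he (by omega) (by omega) (by omega) (by omega)
      omega
    · have := key (u j' + (r' - 1)) (by omega) (by omega)
      have := zinj he (by omega) (by omega) (by omega) (by omega)
      omega
    · have := key (u j + (r - 1)) (by omega) (by omega)
      have := zinj he (by omega) (by omega) (by omega) (by omega)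
      omega
    · have := key (u j + (r - 1)) (by omega) (by omega)
      have := key (u j' + (r' - 1)) (by omega) (by omega)
      have := zinj he (by omega) (by omega) (by omega) (by omega)
      have hi := h.E_inj (by omega) (by omega) this
      have : j = j' := by
        rcases lt_trichotomy j j' with hl | hl | hl
        · have := h.u_mono (a := j + 1) (b := j') hl hj'.le
          omega
        · exact hl
        · have := h.u_mono (a := j' + 1) (b := j) hl hj.le
          omega
      subst this
      omega
  · intro y hy
    obtain ⟨a, ha1, ha2, rfl⟩ := zrep (d := d) (Nat.pos_of_neZero d) y
    rcases Nat.lt_or_ge (E n) a with hlt | hge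
    · exfalso
      apply hy ⟨d - a, by omega⟩ 0 (by omega)
      simp only [if_true]
      congr 1; omega
    · apply hβ
      apply BRel.fixed a ha1 hge
      intro i hi1 hin he
      obtain ⟨j, hj, hji, hij⟩ := h.locate_u hi1 hin
      apply hy ⟨j, hj⟩ (i - u j + 1) (by simp only; omega)
      simp only
      rw [if_neg (by omega), ← he]
      congr 2; omega

theorem cycleType_alpha (h : Layout d s n u E) [NeZero d] (β α : Equiv.Perm (ZMod d))
    (hβ : ∀ x y : ℕ, BRel d s n u E x y → β (x : ZMod d) = y)
    (hαβ : ∀ x, α (β x) = x + 1) (b : ℕ → ℕ)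
    (hb1 : ∀ j, j < s → b (u (j + 1) - 1) = E (u (j + 1)) - E (u (j + 1) - 1) + 1)
    (hb2 : ∀ i, i < n → (∀ j, j < s → u (j + 1) ≠ i + 1) → b i = E (i + 1) - E i) :
    α.cycleType = ((Finset.univ : Finset (Fin n)).val.map (fun i => b i.1)).filter (2 ≤ ·) := by
  have hl := h.Elast
  have hn := h.s_add_two_le
  have hα : ∀ x y : ℕ, BRel d s n u E x y → α (y : ZMod d) = ((x + 1 : ℕ) : ZMod d) := by
    intro x y hxy
    rw [← hβ x y hxy, hαβ]; push_cast; rfl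
  -- index of the spine
  have hex : ∀ i, ∃ j, ((∃ j', j' < s ∧ u (j' + 1) = i + 1) → j < s ∧ u (j + 1) = i + 1) := by
    intro i
    by_cases hi : ∃ j', j' < s ∧ u (j' + 1) = i + 1
    · obtain ⟨j, hj⟩ := hi
      exact ⟨j, fun _ => hj⟩
    · exact ⟨0, fun hh => absurd hh hi⟩
  choose J hJ using hex
  have hJu : ∀ i, (∃ j', j' < s ∧ u (j' + 1) = i + 1) → b i = E (i + 1) - E i + 1 := by
    intro i hi
    obtain ⟨h1, h2⟩ := hJ i hi
    have := hb1 _ h1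
    rw [h2] at this
    simpa using this
  have hJn : ∀ i, i < n → ¬ (∃ j', j' < s ∧ u (j' + 1) = i + 1) → b i = E (i + 1) - E i := by
    intro i hi hh
    push Not at hh
    exact hb2 i hi hh
  have hlastn : ∃ j', j' < s ∧ u (j' + 1) = n := by
    have := h.hs
    refine ⟨s - 1, by omega, ?_⟩
    have e : s - 1 + 1 = s := by omega
    rw [e, h.ulast]
  have hJd : ∀ i r, i < n → r < b i → ¬ r < E (i + 1) - E i →
      (J i < s ∧ u (J i + 1) = i + 1) ∧ r = E (i + 1) - E i := by
    intro i r hi hr hr'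
    by_cases hh : ∃ j', j' < s ∧ u (j' + 1) = i + 1
    · have := hJu i hh
      exact ⟨hJ i hh, by omega⟩
    · have := hJn i hi hh
      omega
  have hbpos : ∀ i, i < n → 1 ≤ b i := by
    intro i hi
    by_cases hh : ∃ j', j' < s ∧ u (j' + 1) = i + 1
    · have := hJu i hh
      omega
    · rw [hJn i hi hh]
      have : i + 1 < n := by
        rcases Nat.lt_or_ge (i + 1) n with hlt | hge
        · exact hlt
        · exfalso; apply hh
          have : i + 1 = n := by omega
          rw [this]; exact hlastn
      have := h.Elt i this
      omega
  have hx0 : ∀ i, i < n → (if 0 < E (i + 1) - E i then E i + 1 + 0 else d - J i) = E i + 1 := by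
    intro i hi
    split_ifs with h0
    · rfl
    · obtain ⟨⟨h1, h2⟩, h3⟩ := hJd i 0 hi (hbpos i hi) h0
      have hin : i + 1 = n := by
        by_contra hcon
        have := h.Elt i (by omega)
        omega
      have : J i + 1 = s := h.u_inj h1 le_rfl (by rw [h2, hin, h.ulast])
      have := h.Ele i hi
      rw [hin] at this h3
      omega
  apply cycleType_of_seq α _
    (fun i r => ((if r < E (i.1 + 1) - E i.1 then E i.1 + 1 + r else d - J i.1 : ℕ) : ZMod d))
  · rintro ⟨i, hi⟩; exact hbpos i hi
  · rintro ⟨i, hi⟩ r hr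
    simp only at hr ⊢
    have hr1 : r < E (i + 1) - E i := by
      by_contra hcon
      have h1 := hJd i r hi (by omega) hcon
      have h2 := hJd i (r + 1) hi hr (by omega)
      omega
    rw [if_pos hr1]
    split_ifs with h2
    · have e : E i + 1 + (r + 1) = E i + 1 + r + 1 := by omega
      rw [e]
      apply hα
      apply BRel.fixed _ (by omega)
      · have := h.E_le (i := i + 1) hi
        omega
      · intro i' hi1 hi' he
        rcases Nat.lt_or_ge i i' with hl | hl
        · have := h.E_mono (a := i + 1) (b := i') hl hi'.le
          omega
        · have := h.E_mono (a := i') (b := i) hl (by omega)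
          omega
    · obtain ⟨⟨h3, h4⟩, h5⟩ := hJd i (r + 1) hi hr h2
      have e : E i + 1 + r = E (i + 1) := by omega
      rw [e]
      rcases Nat.lt_or_ge (J i + 1) s with hlt | hge
      · have := hα _ _ (BRel.first (d := d) (n := n) (u := u) (E := E) (J i + 1) hlt)
        rw [h4] at this
        rw [this]
        congr 1; omega
      · have e2 : J i + 1 = s := by omega
        have e3 : i + 1 = n := by rw [← h4, e2, h.ulast]
        have := hα _ _ (BRel.fixed (d := d) (s := s) (n := n) (u := u) (E := E) (E n) (by
          rw [← e3]; omega) le_rfl (by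
          intro i' hi1 hi' he
          have := h.E_mono (a := i') (b := i) (by omega) (by omega)
          rw [← e3] at he
          omega))
        rw [e3, this]
        congr 1; omega
  · rintro ⟨i, hi⟩
    simp only
    rw [hx0 i hi]
    by_cases hh : ∃ j', j' < s ∧ u (j' + 1) = i + 1
    · obtain ⟨h1, h2⟩ := hJ i hh
      rw [if_neg (by rw [hJu i hh]; omega)]
      have := hα _ _ (BRel.last (d := d) (n := n) (u := u) (E := E) (J i) h1)
      rw [h2] at this
      exact this
    · have hbi := hJn i hi hh
      have := hbpos i hi
      rw [if_pos (by omega)]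
      have e : E i + 1 + (b i - 1) = E (i + 1) := by omega
      rw [e]
      rcases Nat.eq_zero_or_pos i with h0 | h0
      · subst h0
        have := hα _ _ (BRel.first (d := d) (n := n) (u := u) (E := E) 0 h.hs)
        rw [h.u0] at this
        rw [zero_add, this, h.E0]
        push_cast; simp
      · obtain ⟨j, hj, hji, hij⟩ := h.locate_u h0 hi
        apply hα
        apply BRel.step j i hj hji
        by_contra hcon
        exact hh ⟨j, hj, by omega⟩
  · rintro ⟨i, hi⟩ r ⟨i', hi'⟩ r' hr hr' he
    simp only at hr hr' he
    simp only [Fin.mk.injEq]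
    have q1 := h.E_le (i := i + 1) hi
    have q2 := h.E_le (i := i' + 1) hi'
    split_ifs at he with h1 h2 h2
    · have := zinj he (by omega) (by omega) (by omega) (by omega)
      have : i = i' := by
        rcases lt_trichotomy i i' with hl | hl | hl
        · have := h.E_mono (a := i + 1) (b := i') hl hi'.le
          omega
        · exact hl
        · have := h.E_mono (a := i' + 1) (b := i) hl hi.le
          omega
      subst this
      omega
    · have := hJd i' r' hi' hr' h2
      have := zinj he (by omega) (by omega) (by omega) (by omega)
      omega
    · have := hJd i r hi hr h1
      have := zinj he (by omega) (by omega) (by omega) (by omega)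
      omega
    · have a1 := hJd i r hi hr h1
      have a2 := hJd i' r' hi' hr' h2
      have a3 := zinj he (by omega) (by omega) (by omega) (by omega)
      have a4 : J i = J i' := by omega
      have a5 := a1.1.2
      rw [a4, a2.1.2] at a5
      have : i = i' := by omega
      subst this
      omega
  · intro y hy
    exfalso
    obtain ⟨a, ha1, ha2, rfl⟩ := zrep (d := d) (Nat.pos_of_neZero d) y
    rcases Nat.lt_or_ge (E n) a with hlt | hge
    · have hd1 : d - a < s := by omega
      have p1 := h.u_le (j := d - a + 1) hd1
      have p2 := h.ult _ hd1
      have hi : u (d - a + 1) - 1 < n := by omega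
      have hh : ∃ j', j' < s ∧ u (j' + 1) = u (d - a + 1) - 1 + 1 := ⟨d - a, hd1, by omega⟩
      obtain ⟨h1, h2⟩ := hJ _ hh
      have h3 := h.u_inj (a := J (u (d - a + 1) - 1) + 1) (b := d - a + 1) h1 hd1 (by omega)
      have h4 := hJu _ hh
      apply hy ⟨_, hi⟩ (E (u (d - a + 1) - 1 + 1) - E (u (d - a + 1) - 1)) (by simp only; omega)
      simp only
      rw [if_neg (by omega)]
      congr 1; omega
    · obtain ⟨i, hi, h1, h2⟩ := h.locate_E ha1 hge
      have : E (i + 1) - E i ≤ b i := by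
        by_cases hh : ∃ j', j' < s ∧ u (j' + 1) = i + 1
        · have := hJu i hh
          omega
        · exact (hJn i hi hh).ge
      apply hy ⟨i, hi⟩ (a - E i - 1) (by simp only; omega)
      simp only
      rw [if_pos (by omega)]
      congr 1; omega

end Layout

theorem map_fin_eq_range (n : ℕ) (f : ℕ → ℕ) :
    (Finset.univ : Finset (Fin n)).val.map (fun i => f i.1) = (Multiset.range n).map f := by
  have h : (Finset.univ : Finset (Fin n)).val.map (fun i : Fin n => i.1) = Multiset.range n := by
    have := congrArg Finset.val (Fin.map_valEmbedding_univ (n := n))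
    rw [Finset.map_val] at this
    rw [Nat.Iio_eq_range] at this
    exact this
  rw [← h, Multiset.map_map]
  rfl

theorem exists_sorted (M : Multiset ℕ) : ∃ f : ℕ → ℕ,
    (∀ i j, i ≤ j → j < Multiset.card M → f j ≤ f i) ∧
    M = (Multiset.range (Multiset.card M)).map f := by
  set L := M.sort (· ≥ ·) with hL
  have hLM : (L : Multiset ℕ) = M := Multiset.sort_eq M _
  have hlen : L.length = Multiset.card M := by rw [← hLM]; rfl
  refine ⟨fun i => L.getD i 0, ?_, ?_⟩
  · intro i j hij hj
    rcases hij.lt_or_eq with hlt | heq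
    · have hp : L.Pairwise (· ≥ ·) := Multiset.pairwise_sort M _
      have := List.pairwise_iff_getElem.1 hp i j (by omega) (by omega) hlt
      simp only
      rw [List.getD_eq_getElem _ _ (by omega), List.getD_eq_getElem _ _ (by omega)]
      exact this
    · subst heq; exact le_rfl
  · conv_lhs => rw [← hLM]
    rw [← hlen]
    show (L : Multiset ℕ) = ((List.range L.length : List ℕ) : Multiset ℕ).map _
    rw [Multiset.map_coe]
    congr 1
    apply List.ext_getElem
    · simp
    · intro i h1 h2
      simp [h1]

theorem sorted_ge_two (M : Multiset ℕ) (f : ℕ → ℕ)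
    (hf : ∀ i j, i ≤ j → j < Multiset.card M → f j ≤ f i)
    (hM : M = (Multiset.range (Multiset.card M)).map f) (t : ℕ)
    (ht : t ≤ Multiset.card (M.filter (2 ≤ ·))) (i : ℕ) (hi : i < t) : 2 ≤ f i := by
  by_contra hcon
  have h1 : Multiset.card (M.filter (2 ≤ ·)) ≤ i := by
    rw [hM, Multiset.filter_map, Multiset.card_map]
    have h2 : (Multiset.filter ((fun x => 2 ≤ x) ∘ f) (Multiset.range (Multiset.card M)))
        = ((Finset.range (Multiset.card M)).filter (fun l => 2 ≤ f l)).val := rfl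
    rw [h2]
    have h3 : (Finset.range (Multiset.card M)).filter (fun l => 2 ≤ f l) ⊆ Finset.range i := by
      intro l hl
      rw [Finset.mem_filter, Finset.mem_range] at hl
      rw [Finset.mem_range]
      by_contra hli
      have := hf i l (by omega) hl.1
      omega
    have := Finset.card_le_card h3
    rw [Finset.card_range] at this
    exact this
  omega

theorem sum_range_multiset (n : ℕ) (f : ℕ → ℕ) :
    ((Multiset.range n).map f).sum = ∑ l ∈ Finset.range n, f l := rfl

theorem exists_layout (d : ℕ) (P Q : Multiset ℕ) (hPpos : ∀ x ∈ P, 0 < x) (hPsum : P.sum = d)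
    (hcard : Multiset.card P = nu Q + 1) (hQ3 : ∃ q ∈ Q, 3 ≤ q)
    (hnl : Multiset.card (Q.filter (2 ≤ ·)) ≤ Multiset.card (P.filter (2 ≤ ·)) + 1) :
    ∃ (s n : ℕ) (u E b : ℕ → ℕ), Layout d s n u E ∧
      P = (Finset.univ : Finset (Fin n)).val.map (fun i => b i.1) ∧
      Q.filter (2 ≤ ·) = (Finset.univ : Finset (Fin s)).val.map
        (fun j => u (j.1 + 1) - u j.1 + 1) ∧
      (∀ j, j < s → b (u (j + 1) - 1) = E (u (j + 1)) - E (u (j + 1) - 1) + 1) ∧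
      (∀ i, i < n → (∀ j, j < s → u (j + 1) ≠ i + 1) → b i = E (i + 1) - E i) := by
  classical
  obtain ⟨f, hf, hP⟩ := exists_sorted P
  obtain ⟨g, hg, hQ⟩ := exists_sorted (Q.filter (2 ≤ ·))
  set n := Multiset.card P with hn
  set s := Multiset.card (Q.filter (2 ≤ ·)) with hs
  have hg2 : ∀ l, l < s → 2 ≤ g l := by
    intro l hl
    have : g l ∈ Q.filter (2 ≤ ·) := by
      rw [hQ]; exact Multiset.mem_map_of_mem _ (Multiset.mem_range.2 hl)
    exact (Multiset.mem_filter.1 this).2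
  have hg0 : 1 ≤ s ∧ 3 ≤ g 0 := by
    obtain ⟨q, hq, hq3⟩ := hQ3
    have : q ∈ Q.filter (2 ≤ ·) := Multiset.mem_filter.2 ⟨hq, by omega⟩
    rw [hQ] at this
    obtain ⟨l, hl, rfl⟩ := Multiset.mem_map.1 this
    have hl := Multiset.mem_range.1 hl
    have := hg 0 l (by omega) hl
    omega
  obtain ⟨hs1, hg03⟩ := hg0
  have hf1 : ∀ l, l < n → 1 ≤ f l := by
    intro l hl
    apply hPpos
    rw [hP]; exact Multiset.mem_map_of_mem _ (Multiset.mem_range.2 hl)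
  have hf2 : ∀ l, l < s - 1 → 2 ≤ f l := by
    intro l hl
    exact sorted_ge_two P f hf hP (s - 1) (by omega) l hl
  let u : ℕ → ℕ := fun j => 1 + ∑ l ∈ Finset.range j, (g l - 1)
  have husucc : ∀ j, u (j + 1) = u j + (g j - 1) := by
    intro j; simp only [u]; rw [Finset.sum_range_succ]; omega
  have hu0 : u 0 = 1 := by simp [u]
  have hus : u s = n := by
    rw [hcard]
    have h1 : nu Q = ((Q.filter (2 ≤ ·)).map (· - 1)).sum := by
      unfold nu
      conv_lhs => rw [← Multiset.filter_add_not (2 ≤ ·) Q]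
      rw [Multiset.map_add, Multiset.sum_add]
      have : ((Q.filter (fun x => ¬ 2 ≤ x)).map (· - 1)).sum = 0 := by
        apply Multiset.sum_eq_zero
        intro x hx
        obtain ⟨y, hy, rfl⟩ := Multiset.mem_map.1 hx
        have := (Multiset.mem_filter.1 hy).2
        omega
      omega
    rw [h1, hQ, Multiset.map_map]
    simp only [u]
    rw [add_comm]; rfl
  have hult : ∀ j, j < s → u j < u (j + 1) := by
    intro j hj
    have := hg2 j hj
    rw [husucc]; omega
  have humono : ∀ a b, a < b → b ≤ s → u a < u b := by
    intro a b hab hb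
    induction b, hab using Nat.le_induction with
    | base => exact hult a (by omega)
    | succ b _ ih => exact (ih (by omega)).trans (hult b (by omega))
  have hupos : ∀ j, 1 ≤ u j := by intro j; simp only [u]; omega
  have huinj : ∀ a b, a ≤ s → b ≤ s → u a = u b → a = b := by
    intro a b ha hb he
    rcases lt_trichotomy a b with hl | hl | hl
    · have := humono a b hl hb
      omega
    · exact hl
    · have := humono b a hl ha
      omega
  -- the spine predicate
  let A : ℕ → Prop := fun l => ∃ j, 1 ≤ j ∧ j < s ∧ u j = l + 1
  let φ : ℕ → ℕ := fun l => if A l then Nat.count A l else (s - 1) + Nat.count (fun l => ¬ A l) l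
  have hcA : Nat.count A n = s - 1 := by
    rw [Nat.count_eq_card_filter_range]
    have : (Finset.range n).filter A = (Finset.Ico 1 s).image (fun j => u j - 1) := by
      ext l
      simp only [Finset.mem_filter, Finset.mem_range, Finset.mem_image, Finset.mem_Ico, A]
      constructor
      · rintro ⟨_, j, h1, h2, h3⟩
        exact ⟨j, ⟨h1, h2⟩, by omega⟩
      · rintro ⟨j, ⟨h1, h2⟩, h3⟩
        have h4 := hupos j
        have h5 := humono j s h2 le_rfl
        exact ⟨by omega, j, h1, h2, by omega⟩
    rw [this, Finset.card_image_of_injOn, Nat.card_Ico]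
    intro a ha b hb hab
    have ha := Finset.mem_Ico.1 ha
    have hb := Finset.mem_Ico.1 hb
    have h1 := hupos a
    have h2 := hupos b
    simp only at hab
    exact huinj a b (by omega) (by omega) (by omega)
  have hcA' : ∀ m, Nat.count A m + Nat.count (fun l => ¬ A l) m = m := by
    intro m
    induction m with
    | zero => simp
    | succ m ih =>
      rw [Nat.count_succ, Nat.count_succ]
      by_cases hA : A m
      · simp only [hA, if_true, not_true, if_false]; omega
      · simp only [hA, if_false, not_false_iff, if_true]; omega
  have hcn := hcA' n
  have hcltA : ∀ l, l < n → A l → Nat.count A l < s - 1 := by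
    intro l hl hA
    rw [← hcA]; exact Nat.count_strict_mono hA hl
  have hcltA' : ∀ l, l < n → ¬ A l → Nat.count (fun l => ¬ A l) l < Nat.count (fun l => ¬ A l) n := by
    intro l hl hA
    exact Nat.count_strict_mono (p := fun l => ¬ A l) hA hl
  have hφlt : ∀ l, l < n → φ l < n := by
    intro l hl
    simp only [φ]
    split_ifs with hA
    · have := hcltA l hl hA
      omega
    · have := hcltA' l hl hA
      omega
  have hφinj : ∀ l l', l < n → l' < n → φ l = φ l' → l = l' := by
    intro l l' hl hl' he
    simp only [φ] at he
    split_ifs at he with h1 h2 h2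
    · exact Nat.count_injective h1 h2 he
    · have := hcltA l hl h1
      omega
    · have := hcltA l' hl' h2
      omega
    · exact Nat.count_injective (p := fun l => ¬ A l) h1 h2 (by omega)
  have hφmap : (Multiset.range n).map φ = Multiset.range n := by
    have h1 : (Finset.range n).image φ = Finset.range n := by
      apply Finset.eq_of_subset_of_card_le
      · intro x hx
        obtain ⟨l, hl, rfl⟩ := Finset.mem_image.1 hx
        exact Finset.mem_range.2 (hφlt l (Finset.mem_range.1 hl))
      · rw [Finset.card_image_of_injOn]
        intro a ha b hb hab
        exact hφinj a b (by simpa using ha) (by simpa using hb) hab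
    have h2 := Finset.image_val_of_injOn (s := Finset.range n) (f := φ) (by
        intro a ha b hb hab
        exact hφinj a b (by simpa using ha) (by simpa using hb) hab)
    rw [h1] at h2
    exact h2.symm
  let b : ℕ → ℕ := fun l => f (φ l)
  have hPb : P = (Multiset.range n).map b := by
    rw [hP]
    conv_lhs => rw [← hφmap, Multiset.map_map]
    rfl
  let U : ℕ → Prop := fun l => ∃ j, j < s ∧ u (j + 1) = l + 1
  let ind : ℕ → ℕ := fun l => if U l then 1 else 0
  have hind : ∀ l, l < n → ind l ≤ b l := by
    intro l hl
    have := hf1 _ (hφlt l hl)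
    simp only [ind, b]
    split_ifs <;> omega
  have hindlt : ∀ l, l + 1 < n → ind l < b l := by
    intro l hl
    have h1 := hf1 _ (hφlt l (by omega))
    simp only [ind]
    split_ifs with hU
    · obtain ⟨j, hj, hju⟩ := hU
      have hj2 : j + 1 < s := by
        by_contra hcon
        have : j + 1 = s := by omega
        rw [this] at hju
        omega
      have hA : A l := ⟨j + 1, by omega, hj2, hju⟩
      simp only [b, φ]
      rw [if_pos hA]
      have := hf2 _ (hcltA l (by omega) hA)
      omega
    · exact h1
  let E : ℕ → ℕ := fun i => ∑ l ∈ Finset.range i, (b l - ind l)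
  have hEsucc : ∀ i, E (i + 1) = E i + (b i - ind i) := by
    intro i; simp only [E]; rw [Finset.sum_range_succ]
  have hsumind : ∑ l ∈ Finset.range n, ind l = s := by
    simp only [ind]
    rw [Finset.sum_boole]
    have : (Finset.range n).filter U = (Finset.range s).image (fun j => u (j + 1) - 1) := by
      ext l
      simp only [Finset.mem_filter, Finset.mem_range, Finset.mem_image, U]
      constructor
      · rintro ⟨_, j, h2, h3⟩
        exact ⟨j, h2, by omega⟩
      · rintro ⟨j, h2, h3⟩
        have h4 := hupos (j + 1)
        have h5 : u (j + 1) ≤ n := by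
          rcases Nat.lt_or_ge (j + 1) s with hl | hl
          · rw [← hus]; exact (humono _ _ hl le_rfl).le
          · have : j + 1 = s := by omega
            rw [this, hus]
        exact ⟨by omega, j, h2, by omega⟩
    rw [this, Finset.card_image_of_injOn]
    · simp
    · intro a ha b hb hab
      have ha := Finset.mem_range.1 ha
      have hb := Finset.mem_range.1 hb
      have h1 := hupos (a + 1)
      have h2 := hupos (b + 1)
      simp only at hab
      have := huinj (a + 1) (b + 1) (by omega) (by omega) (by omega)
      omega
  have hbnotU : ∀ i, ¬ U i → b i = E (i + 1) - E i := by
    intro i hi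
    rw [hEsucc]; simp only [ind]; rw [if_neg hi]; omega
  refine ⟨s, n, u, E, b, ?_, ?_, ?_, ?_, ?_⟩
  · constructor
    · exact hs1
    · exact hu0
    · exact hus
    · exact hult
    · rw [husucc, hu0]; omega
    · intro j j' hjj hj'
      rw [husucc, husucc]
      have := hg j j' hjj hj'
      omega
    · simp [E]
    · intro i hi
      have := hindlt i hi
      rw [hEsucc]; omega
    · intro i _
      rw [hEsucc]; omega
    · have h1 : ∑ l ∈ Finset.range n, b l = d := by
        rw [← sum_range_multiset, ← hPb, hPsum]
      have h2 : ∑ l ∈ Finset.range n, ((b l - ind l) + ind l) = ∑ l ∈ Finset.range n, b l := by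
        apply Finset.sum_congr rfl
        intro l hl
        have := hind l (Finset.mem_range.1 hl)
        omega
      rw [Finset.sum_add_distrib, hsumind, h1] at h2
      exact h2
    · intro i i' hi hii hi' hni hni'
      have key : ∀ i, 1 ≤ i → i < n → (∀ j, 1 ≤ j → j ≤ s → u j ≠ i) →
          E i - E (i - 1) = b (i - 1) ∧ ¬ A (i - 1) := by
        intro i h1 h2 h3
        constructor
        · have := hbnotU (i - 1) (by
            rintro ⟨j, hj, hju⟩
            exact h3 (j + 1) (by omega) (by omega) (by omega))
          have e : i - 1 + 1 = i := by omega
          rw [e] at this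
          exact this.symm
        · rintro ⟨j, hj1, hj, hju⟩
          exact h3 j hj1 hj.le (by omega)
      obtain ⟨k1, k2⟩ := key i hi (by omega) hni
      obtain ⟨k1', k2'⟩ := key i' (by omega) hi' hni'
      rw [k1, k1']
      apply hf
      · simp only [φ]
        rw [if_neg k2, if_neg k2']
        have := Nat.count_monotone (fun l => ¬ A l) (show i - 1 ≤ i' - 1 by omega)
        omega
      · exact hφlt _ (by omega)
  · rw [map_fin_eq_range]; exact hPb
  · rw [map_fin_eq_range s (fun j => u (j + 1) - u j + 1), hQ]
    apply Multiset.map_congr rfl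
    intro j hj
    have := hg2 j (Multiset.mem_range.1 hj)
    rw [husucc]; omega
  · intro j hj
    have h1 := hupos (j + 1)
    have e : u (j + 1) - 1 + 1 = u (j + 1) := by omega
    have h2 := hEsucc (u (j + 1) - 1)
    rw [e] at h2
    have hU : U (u (j + 1) - 1) := ⟨j, hj, by omega⟩
    have h3 : ind (u (j + 1) - 1) = 1 := by simp only [ind]; rw [if_pos hU]
    have h4 : u (j + 1) ≤ n := by
      rcases Nat.lt_or_ge (j + 1) s with hl | hl
      · rw [← hus]; exact (humono _ _ hl le_rfl).le
      · have : j + 1 = s := by omega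
        rw [this, hus]
    have h5 := hind (u (j + 1) - 1) (by omega)
    omega
  · intro i _ hni
    apply hbnotU
    rintro ⟨j, hj, hju⟩
    exact hni j hj hju

theorem block_false {d s n : ℕ} [NeZero d] {u E : ℕ → ℕ} (hd : Odd d) (h : Layout d s n u E)
    (β α : Equiv.Perm (ZMod d))
    (hβ : ∀ x y : ℕ, BRel d s n u E x y → β (x : ZMod d) = y)
    (hαβ : ∀ x, α (β x) = x + 1) (hgα : (fullCycleType α).gcd = 1)
    (hgβ : (fullCycleType β).gcd = 1)
    (H : AddSubgroup (ZMod d)) (hH0 : ∃ z ∈ H, z ≠ 0) (hH1 : ∃ z, z ∉ H)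
    (hres : ∀ x y, x - y ∈ H → β x - β y ∈ H) : False := by
  have hl := h.Elast
  have hs := h.hs
  -- the generator
  have hgen : ∃ k : ℕ, ∀ m : ℕ, ((m : ℕ) : ZMod d) ∈ H ↔ k ∣ m := by
    obtain ⟨a, ha⟩ := Int.subgroup_cyclic (H.comap (Int.castAddHom (ZMod d)))
    refine ⟨a.natAbs, fun m => ?_⟩
    have h1 : ((m : ℕ) : ZMod d) ∈ H ↔ (m : ℤ) ∈ H.comap (Int.castAddHom (ZMod d)) := by
      rw [AddSubgroup.mem_comap]; simp
    rw [h1, ha, AddSubgroup.mem_closure_singleton, ← Int.natCast_dvd_natCast, Int.natAbs_dvd]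
    constructor
    · rintro ⟨c, hc⟩
      exact ⟨c, by rw [← hc, smul_eq_mul, mul_comm]⟩
    · rintro ⟨c, hc⟩
      exact ⟨c, by rw [hc, smul_eq_mul, mul_comm]⟩
  obtain ⟨k, hk⟩ := hgen
  have hrep : ∀ z : ZMod d, ∃ m : ℕ, (m : ZMod d) = z := fun z => ⟨z.val, ZMod.natCast_zmod_val z⟩
  have hkd : k ∣ d := (hk d).1 (by simp)
  have hk0 : k ≠ 0 := by
    rintro rfl
    have := Nat.eq_zero_of_zero_dvd hkd
    exact NeZero.ne d this
  have hk1 : 1 < k := by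
    by_contra hcon
    have : k = 1 := by omega
    subst this
    obtain ⟨z, hz⟩ := hH1
    obtain ⟨m, rfl⟩ := hrep z
    exact hz ((hk m).2 (one_dvd _))
  have hkne : k ≠ d := by
    rintro rfl
    obtain ⟨z, hz, hz0⟩ := hH0
    obtain ⟨m, rfl⟩ := hrep z
    exact hz0 ((ZMod.natCast_eq_zero_iff _ _).2 ((hk m).1 hz))
  have hk3 : 3 * k ≤ d := by
    obtain ⟨m, hm⟩ := hkd
    have h1 : Odd m := by
      rw [hm] at hd
      exact (Nat.odd_mul.1 hd).2
    have h2 : m ≠ 1 := by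
      rintro rfl
      rw [mul_one] at hm
      exact hkne hm.symm
    obtain ⟨r, rfl⟩ := h1
    have : 3 ≤ 2 * r + 1 := by omega
    rw [hm, mul_comm k]
    exact Nat.mul_le_mul_right _ this
  have : NeZero k := ⟨hk0⟩
  set π := ZMod.castHom hkd (ZMod k) with hπ
  have hπ0 : ∀ z, π z = 0 ↔ z ∈ H := by
    intro z
    obtain ⟨m, rfl⟩ := hrep z
    rw [map_natCast, ZMod.natCast_eq_zero_iff, hk]
  have hπsurj : Function.Surjective π := ZMod.castHom_surjective hkd
  obtain ⟨sec, hsec⟩ := hπsurj.hasRightInverse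
  let B : ZMod k → ZMod k := fun z => π (β (sec z))
  have hB : ∀ x, B (π x) = π (β x) := by
    intro x
    have h1 : sec (π x) - x ∈ H := by
      rw [← hπ0, map_sub, hsec, sub_self]
    have h2 := hres _ _ h1
    rw [← hπ0, map_sub, sub_eq_zero] at h2
    exact h2
  have hBsurj : Function.Surjective B := by
    intro w
    obtain ⟨x, rfl⟩ := hπsurj w
    exact ⟨π (β⁻¹ x), by rw [hB]; simp⟩
  have hBinj : Function.Injective B := Finite.injective_iff_surjective.2 hBsurj
  have hBR : ∀ x y : ℕ, BRel d s n u E x y → B (x : ZMod k) = (y : ZMod k) := by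
    intro x y hxy
    have h1 := hB (x : ZMod d)
    rw [hβ x y hxy, map_natCast, map_natCast] at h1
    exact h1
  have hneg : ∀ j, j < s → -(j : ZMod k) = ((d - j : ℕ) : ZMod k) := by
    intro j hj
    rw [Nat.cast_sub (by omega), (ZMod.natCast_eq_zero_iff d k).2 hkd, zero_sub]
  refine core h hkd hk1 hk3 B hBinj ?_ ?_ ?_ ?_ ?_ ?_
  · intro j hj i h1 h2
    exact hBR _ _ (BRel.step j i hj h1 h2)
  · intro j hj
    rw [hneg j hj]
    exact hBR _ _ (BRel.last j hj)
  · intro j hj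
    rw [hneg j hj]
    exact hBR _ _ (BRel.first j hj)
  · intro x h1 h2 h3
    exact hBR _ _ (BRel.fixed x h1 h2 h3)
  · intro y hy1 hyk
    by_contra hcon
    push Not at hcon
    set g := (ZMod.castHom hyk (ZMod y)).comp π with hg
    have h1 : ∀ x, g (β x) = g x := by
      intro x
      have := hcon (π x)
      rw [hB] at this
      exact this
    have h2 : ∀ x, g (α x) = g x + 1 := by
      intro x
      obtain ⟨x', rfl⟩ := β.surjective x
      rw [hαβ, h1, map_add, map_one]
    have h3 := grading_dvd α g h2
    rw [hgα] at h3
    have := Nat.le_of_dvd one_pos h3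
    omega
  · by_contra hcon
    push Not at hcon
    have h3 := grading_dvd β π (by intro x; rw [← hB, hcon])
    rw [hgβ] at h3
    have := Nat.le_of_dvd one_pos h3
    omega

theorem primitive_of_layout {d s n : ℕ} [NeZero d] {u E : ℕ → ℕ} (hd : Odd d)
    (h : Layout d s n u E) (β α : Equiv.Perm (ZMod d))
    (hβ : ∀ x y : ℕ, BRel d s n u E x y → β (x : ZMod d) = y)
    (hαβ : ∀ x, α (β x) = x + 1) (hgα : (fullCycleType α).gcd = 1)
    (hgβ : (fullCycleType β).gcd = 1) (G : Subgroup (Equiv.Perm (ZMod d)))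
    (hαG : α ∈ G) (hβG : β ∈ G) : SubgroupPrimitive G := by
  have hpow : ∀ (m : ℕ) (x : ZMod d), ((α * β) ^ m) x = x + m := by
    intro m x
    induction m with
    | zero => simp
    | succ m ih =>
      rw [pow_succ', Equiv.Perm.mul_apply, ih, Equiv.Perm.mul_apply, hαβ]
      push_cast; ring
  have htr : ∀ z : ZMod d, ∃ g ∈ G, ∀ x, g x = x + z := by
    intro z
    refine ⟨(α * β) ^ z.val, G.pow_mem (G.mul_mem hαG hβG) _, fun x => ?_⟩
    rw [hpow, ZMod.natCast_zmod_val]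
  refine ⟨?_, ?_⟩
  · intro x y
    obtain ⟨g, hg, hgx⟩ := htr (y - x)
    exact ⟨g, hg, by rw [hgx]; ring⟩
  · rintro Λ ⟨⟨x0, hx0⟩, hblk⟩
    have hstab : ∀ g ∈ G, ∀ x ∈ Λ, g x ∈ Λ → g '' Λ = Λ := by
      intro g hg x hx hgx
      rcases hblk g hg with h1 | h1
      · exact h1
      · exact absurd hgx (Set.disjoint_left.1 h1 ⟨x, hx, rfl⟩)
    have htrans : ∀ z, x0 + z ∈ Λ → ∀ x, x ∈ Λ ↔ x + z ∈ Λ := by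
      intro z hz x
      obtain ⟨g, hg, hgx⟩ := htr z
      have h1 := hstab g hg x0 hx0 (by rw [hgx]; exact hz)
      constructor
      · intro hx
        rw [← h1]; exact ⟨x, hx, hgx x⟩
      · intro hx
        rw [← h1] at hx
        obtain ⟨y, hy, hyx⟩ := hx
        rw [hgx] at hyx
        rwa [← add_right_cancel hyx]
    let H : AddSubgroup (ZMod d) :=
      { carrier := {z | x0 + z ∈ Λ}
        zero_mem' := by simpa using hx0
        add_mem' := by
          intro a b ha hb
          have := (htrans b hb (x0 + a)).1 ha
          rwa [add_assoc] at this
        neg_mem' := by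
          intro a ha
          have := (htrans a ha (x0 + -a)).2 (by simpa using hx0)
          exact this }
    have hH : ∀ z, z ∈ H ↔ x0 + z ∈ Λ := fun z => Iff.rfl
    by_contra htriv
    unfold TrivialBlock at htriv
    push Not at htriv
    obtain ⟨ht1, ht2⟩ := htriv
    refine block_false hd h β α hβ hαβ hgα hgβ H ?_ ?_ ?_
    · by_contra hcon
      push Not at hcon
      apply ht1 x0
      ext x
      rw [Set.mem_singleton_iff]
      constructor
      · intro hx
        have := hcon (x - x0) (by rw [hH]; simpa using hx)
        exact sub_eq_zero.1 this
      · rintro rfl; exact hx0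
    · by_contra hcon
      push Not at hcon
      apply ht2
      ext x
      simp only [Set.mem_univ, iff_true]
      have := (hH _).1 (hcon (x - x0))
      simpa using this
    · intro x y hxy
      obtain ⟨g1, hg1, hg1x⟩ := htr (y - x0)
      obtain ⟨g2, hg2, hg2x⟩ := htr (x0 - β y)
      have hmem : g2 * β * g1 ∈ G := G.mul_mem (G.mul_mem hg2 hβG) hg1
      have hval : ∀ z, (g2 * β * g1) z = β (z + (y - x0)) + (x0 - β y) := by
        intro z
        rw [Equiv.Perm.mul_apply, Equiv.Perm.mul_apply, hg1x, hg2x]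
      have h1 := hstab _ hmem x0 hx0 (by rw [hval]; simpa using hx0)
      have h2 : (g2 * β * g1) (x0 + (x - y)) ∈ Λ := by
        rw [← h1]; exact ⟨_, (hH _).1 hxy, rfl⟩
      rw [hval] at h2
      rw [hH]
      convert h2 using 1
      have : x0 + (x - y) + (y - x0) = x := by ring
      rw [this]; ring

theorem fullCycleType_permCongr {X Y : Type*} [Fintype X] [DecidableEq X] [Fintype Y]
    [DecidableEq Y] (e : X ≃ Y) (σ : Equiv.Perm X) :
    fullCycleType (e.permCongr σ) = fullCycleType σ := by
  let f : X ≃ {y : Y // True} := e.trans (Equiv.subtypeUnivEquiv (fun _ => trivial)).symm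
  have h1 : e.permCongr σ = σ.extendDomain f := by
    ext y
    obtain ⟨x, rfl⟩ := e.surjective y
    have := Equiv.Perm.extendDomain_apply_image σ f x
    have h2 : ∀ x, ((f x : {y : Y // True}) : Y) = e x := fun x => rfl
    rw [h2, h2] at this
    rw [this]; simp
  have h2 : (e.permCongr σ).cycleType = σ.cycleType := by
    rw [h1]; exact Equiv.Perm.cycleType_extendDomain f
  unfold fullCycleType
  rw [← Equiv.Perm.sum_cycleType, ← Equiv.Perm.sum_cycleType, h2, Fintype.card_congr e]

theorem nu_add_card (D : Multiset ℕ) (h : ∀ x ∈ D, 0 < x) : nu D + Multiset.card D = D.sum := by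
  induction D using Multiset.induction_on with
  | empty => simp [nu]
  | cons a D ih =>
    have h1 := ih (fun x hx => h x (Multiset.mem_cons_of_mem hx))
    have h2 := h a (Multiset.mem_cons_self a D)
    unfold nu at h1 ⊢
    rw [Multiset.map_cons, Multiset.sum_cons, Multiset.card_cons, Multiset.sum_cons]
    omega

theorem main_pq {Ω : Type*} [Fintype Ω] [DecidableEq Ω] (d : ℕ) (hcard : Fintype.card Ω = d)
    (hd : Odd d) (P Q : Multiset ℕ) (hP : IsPartitionOf d P) (hQ : IsPartitionOf d Q)
    (hsum : nu P + nu Q = d - 1) (hg1 : P.gcd = 1) (hg2 : Q.gcd = 1)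
    (hQ3 : ∃ q ∈ Q, 3 ≤ q)
    (hnl : Multiset.card (Q.filter (2 ≤ ·)) ≤ Multiset.card (P.filter (2 ≤ ·)) + 1) :
    ∃ α β : Equiv.Perm Ω, fullCycleType α = P ∧ fullCycleType β = Q ∧ (α * β) ^ d = 1 ∧
      ∀ G : Subgroup (Equiv.Perm Ω), α ∈ G → β ∈ G → SubgroupPrimitive G := by
  have hd0 : 0 < d := hd.pos
  have : NeZero d := ⟨hd0.ne'⟩
  have hPc := nu_add_card P hP.1
  rw [hP.2] at hPc
  obtain ⟨s, n, u, E, b, h, hPb, hQu, hb1, hb2⟩ := exists_layout d P Q hP.1 hP.2 (by omega) hQ3 hnl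
  obtain ⟨β, hβ⟩ := h.exists_beta
  let α : Equiv.Perm (ZMod d) := Equiv.addRight 1 * β⁻¹
  have hαβ : ∀ x, α (β x) = x + 1 := by
    intro x; simp [α]
  have cβ : fullCycleType β = Q := by
    apply fullCycleType_eq β Q hQ.1 (by rw [ZMod.card]; exact hQ.2)
    rw [h.cycleType_beta β hβ, ← hQu, Multiset.filter_filter]
    simp
  have cα : fullCycleType α = P := by
    apply fullCycleType_eq α P hP.1 (by rw [ZMod.card]; exact hP.2)
    rw [h.cycleType_alpha β α hβ hαβ b hb1 hb2, ← hPb]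
  have hprim := primitive_of_layout hd h β α hβ hαβ (by rw [cα, hg1]) (by rw [cβ, hg2])
  have hpow : (α * β) ^ d = 1 := by
    have : ∀ (m : ℕ) (x : ZMod d), ((α * β) ^ m) x = x + m := by
      intro m x
      induction m with
      | zero => simp
      | succ m ih =>
        rw [pow_succ', Equiv.Perm.mul_apply, ih, Equiv.Perm.mul_apply, hαβ]
        push_cast; ring
    ext1 x
    rw [this]; simp
  have e : ZMod d ≃ Ω := Fintype.equivOfCardEq (by rw [ZMod.card, hcard])
  refine ⟨e.permCongr α, e.permCongr β, ?_, ?_, ?_, ?_⟩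
  · rw [fullCycleType_permCongr, cα]
  · rw [fullCycleType_permCongr, cβ]
  · have h1 : e.permCongrHom ((α * β) ^ d) = 1 := by rw [hpow, map_one]
    rw [map_pow, map_mul] at h1
    exact h1
  · intro G hα hβ'
    obtain ⟨ht, hb⟩ := hprim (G.comap e.permCongrHom.toMonoidHom) hα hβ'
    have hsymm : ∀ g ∈ G, e.symm.permCongr g ∈ G.comap e.permCongrHom.toMonoidHom := by
      intro g hg
      show e.permCongr (e.symm.permCongr g) ∈ G
      have : e.permCongr (e.symm.permCongr g) = g := by ext x; simp
      rwa [this]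
    refine ⟨?_, ?_⟩
    · intro x y
      obtain ⟨g, hg, hgx⟩ := ht (e.symm x) (e.symm y)
      refine ⟨e.permCongr g, hg, ?_⟩
      rw [Equiv.permCongr_apply, hgx]; simp
    · rintro Λ ⟨hne, hblk⟩
      have hb' := hb (e ⁻¹' Λ) ⟨by
        obtain ⟨x, hx⟩ := hne
        exact ⟨e.symm x, by simpa using hx⟩, by
        intro g hg
        have key : g '' (e ⁻¹' Λ) = e ⁻¹' ((e.permCongr g) '' Λ) := by
          ext x
          constructor
          · rintro ⟨y, hy, rfl⟩
            exact ⟨e y, hy, by simp⟩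
          · rintro ⟨y, hy, hyx⟩
            refine ⟨e.symm y, by simpa using hy, ?_⟩
            rw [Equiv.permCongr_apply] at hyx
            exact e.injective hyx
        rw [key]
        rcases hblk (e.permCongr g) hg with h1 | h1
        · left; rw [h1]
        · right; exact h1.preimage e⟩
      rcases hb' with ⟨x, hx⟩ | hx
      · left
        refine ⟨e x, ?_⟩
        ext y
        have h1 : e.symm y ∈ e ⁻¹' Λ ↔ e.symm y ∈ ({x} : Set (ZMod d)) := by rw [hx]
        simp only [Set.mem_preimage, Equiv.apply_symm_apply, Set.mem_singleton_iff] at h1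
        rw [h1, Set.mem_singleton_iff, Equiv.symm_apply_eq]
      · right
        ext y
        have h1 : e.symm y ∈ e ⁻¹' Λ ↔ e.symm y ∈ (Set.univ : Set (ZMod d)) := by rw [hx]
        simpa using h1

theorem nu_small (D : Multiset ℕ) (h : ∀ x ∈ D, 0 < x) (h3 : ¬ ∃ q ∈ D, 3 ≤ q) :
    nu D = Multiset.card (D.filter (2 ≤ ·)) ∧
    D = Multiset.replicate (nu D) 2 + Multiset.replicate (Multiset.card D - nu D) 1 := by
  push Not at h3
  have h1 := Multiset.filter_add_not (2 ≤ ·) D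
  have e1 : D.filter (2 ≤ ·) = Multiset.replicate (Multiset.card (D.filter (2 ≤ ·))) 2 := by
    rw [Multiset.eq_replicate_card]
    intro b hb
    have hb' := Multiset.mem_filter.1 hb
    have := h3 b hb'.1
    omega
  have e2 : D.filter (fun x => ¬ 2 ≤ x)
      = Multiset.replicate (Multiset.card (D.filter (fun x => ¬ 2 ≤ x))) 1 := by
    rw [Multiset.eq_replicate_card]
    intro b hb
    have hb' := Multiset.mem_filter.1 hb
    have := h b hb'.1
    omega
  have hnu : nu D = Multiset.card (D.filter (2 ≤ ·)) := by
    unfold nu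
    conv_lhs => rw [← h1, e1, e2]
    simp
  refine ⟨hnu, ?_⟩
  have h4 := congrArg Multiset.card h1
  rw [Multiset.card_add] at h4
  have h5 : Multiset.card D - nu D = Multiset.card (D.filter (fun x => ¬ 2 ≤ x)) := by omega
  rw [h5, hnu, ← e1, ← e2, h1]

theorem fullCycleType_conj {X : Type*} [Fintype X] [DecidableEq X] (σ τ : Equiv.Perm X) :
    fullCycleType (τ * σ * τ⁻¹) = fullCycleType σ := by
  unfold fullCycleType
  rw [← Equiv.Perm.sum_cycleType, ← Equiv.Perm.sum_cycleType, Equiv.Perm.cycleType_conj]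

/-- If `gcd(D₁) = gcd(D₂) = 1` and `𝒟 ≠ {[2,…,2,1],[2,…,2,1]}`, then there are
`α ∈ D₁`, `β ∈ D₂` and `ω` with `ω² = αβ` such that `⟨α, β, ω⟩` is transitive and primitive. -/
theorem statement_8 {Ω : Type*} [Fintype Ω] [DecidableEq Ω] (d : ℕ)
    (hcard : Fintype.card Ω = d) (hd : Odd d) (hdpos : 0 < d)
    (D₁ D₂ : Multiset ℕ) (hP1 : IsPartitionOf d D₁) (hP2 : IsPartitionOf d D₂)
    (hsum : nu D₁ + nu D₂ = d - 1) (hord : nu D₂ ≤ nu D₁)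
    (hg1 : D₁.gcd = 1) (hg2 : D₂.gcd = 1)
    (hne : ¬ (D₁ = twosAndOne d ∧ D₂ = twosAndOne d)) :
    ∃ α β ω : Equiv.Perm Ω, fullCycleType α = D₁ ∧ fullCycleType β = D₂ ∧
      ω ^ 2 = α * β ∧
      SubgroupTransitive (Subgroup.closure {α, β, ω}) ∧
      SubgroupPrimitive (Subgroup.closure {α, β, ω}) := by
  have c1 := nu_add_card D₁ hP1.1
  have c2 := nu_add_card D₂ hP2.1
  rw [hP1.2] at c1
  rw [hP2.2] at c2
  have hsq : ∀ c : Equiv.Perm Ω, c ^ d = 1 → (c ^ ((d + 1) / 2)) ^ 2 = c := by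
    intro c hc
    obtain ⟨r, hr⟩ := hd
    have e : (d + 1) / 2 * 2 = d + 1 := by omega
    rw [← pow_mul, e, pow_succ, hc, one_mul]
  -- the two role assignments
  have caseA : (∃ q ∈ D₂, 3 ≤ q) →
      Multiset.card (D₂.filter (2 ≤ ·)) ≤ Multiset.card (D₁.filter (2 ≤ ·)) + 1 →
      ∃ α β ω : Equiv.Perm Ω, fullCycleType α = D₁ ∧ fullCycleType β = D₂ ∧
      ω ^ 2 = α * β ∧
      SubgroupTransitive (Subgroup.closure {α, β, ω}) ∧
      SubgroupPrimitive (Subgroup.closure {α, β, ω}) := by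
    intro h3 hnl
    obtain ⟨α, β, hα, hβ, hpow, hprim⟩ :=
      main_pq d hcard hd D₁ D₂ hP1 hP2 hsum hg1 hg2 h3 hnl
    have hp := hprim (Subgroup.closure {α, β, (α * β) ^ ((d + 1) / 2)})
      (Subgroup.subset_closure (by simp)) (Subgroup.subset_closure (by simp))
    exact ⟨α, β, (α * β) ^ ((d + 1) / 2), hα, hβ, hsq _ hpow, hp.1, hp⟩
  have caseB : (∃ q ∈ D₁, 3 ≤ q) →
      Multiset.card (D₁.filter (2 ≤ ·)) ≤ Multiset.card (D₂.filter (2 ≤ ·)) + 1 →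
      ∃ α β ω : Equiv.Perm Ω, fullCycleType α = D₁ ∧ fullCycleType β = D₂ ∧
      ω ^ 2 = α * β ∧
      SubgroupTransitive (Subgroup.closure {α, β, ω}) ∧
      SubgroupPrimitive (Subgroup.closure {α, β, ω}) := by
    intro h3 hnl
    obtain ⟨α, β, hα, hβ, hpow, hprim⟩ :=
      main_pq d hcard hd D₂ D₁ hP2 hP1 (by omega) hg2 hg1 h3 hnl
    have hm1 : β ∈ Subgroup.closure {β, β⁻¹ * α * β, (α * β) ^ ((d + 1) / 2)} :=
      Subgroup.subset_closure (by simp)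
    have hm2 : β⁻¹ * α * β ∈ Subgroup.closure {β, β⁻¹ * α * β, (α * β) ^ ((d + 1) / 2)} :=
      Subgroup.subset_closure (by simp)
    have hm3 : α ∈ Subgroup.closure {β, β⁻¹ * α * β, (α * β) ^ ((d + 1) / 2)} := by
      have := Subgroup.mul_mem _ (Subgroup.mul_mem _ hm1 hm2) (Subgroup.inv_mem _ hm1)
      have e : β * (β⁻¹ * α * β) * β⁻¹ = α := by group
      rwa [e] at this
    have hp := hprim _ hm3 hm1
    refine ⟨β, β⁻¹ * α * β, (α * β) ^ ((d + 1) / 2), hβ, ?_, ?_, hp.1, hp⟩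
    · have := fullCycleType_conj α β⁻¹
      rw [inv_inv] at this
      rw [this, hα]
    · rw [hsq _ hpow]; group
  by_cases h1 : ∃ q ∈ D₁, 3 ≤ q
  · by_cases h2 : ∃ q ∈ D₂, 3 ≤ q
    · rcases le_total (Multiset.card (D₂.filter (2 ≤ ·))) (Multiset.card (D₁.filter (2 ≤ ·)))
        with hle | hle
      · exact caseA h2 (by omega)
      · exact caseB h1 (by omega)
    · apply caseB h1
      have h3 := (nu_small D₂ hP2.1 h2).1
      have h4 := Multiset.card_le_card (Multiset.filter_le (2 ≤ ·) D₁)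
      omega
  · by_cases h2 : ∃ q ∈ D₂, 3 ≤ q
    · apply caseA h2
      have h3 := (nu_small D₁ hP1.1 h1).1
      have h4 := Multiset.card_le_card (Multiset.filter_le (2 ≤ ·) D₂)
      omega
    · exfalso
      obtain ⟨a1, a2⟩ := nu_small D₁ hP1.1 h1
      obtain ⟨b1, b2⟩ := nu_small D₂ hP2.1 h2
      have h3 := Multiset.card_le_card (Multiset.filter_le (2 ≤ ·) D₁)
      have h4 := Multiset.card_le_card (Multiset.filter_le (2 ≤ ·) D₂)
      obtain ⟨r, hr⟩ := hd
      apply hne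
      have e1 : nu D₁ = (d - 1) / 2 := by omega
      have e2 : nu D₂ = (d - 1) / 2 := by omega
      have e3 : Multiset.card D₁ - nu D₁ = 1 := by omega
      have e4 : Multiset.card D₂ - nu D₂ = 1 := by omega
      rw [e3, e1] at a2
      rw [e4, e2] at b2
      exact ⟨a2, b2⟩
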